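/- arXiv:2605.19434 — 4 statements merged into one kernel-verified Lean document; each statement's English description precedes it below -/
import Mathlib

section
/- Let Z be a finite nonempty set of points of ℙⁿ(K) with n ≥ 2 having the Uniform Position Property, and let a be the least degree ℓ such that [I_Z]_ℓ ≠ 0. Then [I_Z]_a contains an irreducible form (this is the existential consequence of the paper's statement that a general form in [I_Z]_a is irreducible). -/
/-!
The theorem is a dimension count. If `F = G * H` lies in `[I_Z]_a` with `G`, `H` forms of degrees
`b, c ≥ 1`, `b + c = a`, then `G ∈ [I_Y]_b` and `H ∈ [I_{Z \ Y}]_c`, where `Y` is the set of points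
of `Z` at which `G` vanishes. As `b, c < a`, `Z` imposes `dim S_b` and `dim S_c` conditions in these
degrees, so by uniform position the nonzero spaces `[I_Y]_b` and `[I_{Z \ Y}]_c` have the expected
dimensions `dim S_b - |Y|` and `dim S_c - |Z \ Y|` (`finrank_IZcomp_add_card`). Their sum
`dim S_b + dim S_c - |Z|` is at most `dim S_a - |Z| ≤ dim [I_Z]_a` because `n ≥ 2`
(`choose_add_choose_le`).

Products depend on one parameter fewer than the pair of factors, by rescaling, so for each `b` and
`Y` they lie on a hypersurface of `[I_Z]_a` (`exists_hypersurface`, from a transcendence degree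
bound). There are finitely many pairs `(b, Y)` and `K` is infinite, so some nonzero form in
`[I_Z]_a` avoids all these hypersurfaces, and it is irreducible.
-/

open MvPolynomial Module

noncomputable section

variable {K : Type} [Field K]

/-- The degree-`ℓ` component of the homogeneous ideal of a finite set `Z` of
(affine representatives of) points of `ℙⁿ(K)`: homogeneous forms of degree `ℓ`
vanishing at every point of `Z`. -/
def IZcomp (n : ℕ) (Z : Finset (Fin (n+1) → K)) (ℓ : ℕ) :
    Submodule K (MvPolynomial (Fin (n+1)) K) :=
  homogeneousSubmodule (Fin (n+1)) K ℓ ⊓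
    ⨅ v ∈ Z, LinearMap.ker (aeval (R := K) (S₁ := K) v).toLinearMap

/-- `h_Z(ℓ)`: the number of conditions `Z` imposes in degree `ℓ`. -/
def hfun (n : ℕ) (Z : Finset (Fin (n+1) → K)) (ℓ : ℕ) : ℕ :=
  finrank K (homogeneousSubmodule (Fin (n+1)) K ℓ) - finrank K (IZcomp n Z ℓ)

/-- The Uniform Position Property. -/
def UPP (n : ℕ) (Z : Finset (Fin (n+1) → K)) : Prop :=
  ∀ ℓ : ℕ, ∀ Y ⊆ Z, hfun n Y ℓ = min Y.card (hfun n Z ℓ)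

/-! ### Images of bilinear maps -/

/-- A polynomial map from an affine space of dimension `#τ` to one of larger dimension `N`
is not dominant: by transcendence degree its coordinates satisfy a polynomial relation. -/
lemma exists_relation {K : Type} [Field K] {τ : Type} [Fintype τ] {N : ℕ}
    (hτ : Fintype.card τ < N) (f : Fin N → MvPolynomial τ K) :
    ∃ P : MvPolynomial (Fin N) K, P ≠ 0 ∧ aeval f P = 0 := by
  by_contra! hcon
  have hind : AlgebraicIndependent K f := by
    rw [algebraicIndependent_iff]
    intro P hP
    by_contra h
    exact hcon P h hP
  have h1 := hind.lift_cardinalMk_le_trdeg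
  rw [MvPolynomial.trdeg_of_isDomain] at h1
  simp only [Cardinal.mk_fintype, Fintype.card_fin, Cardinal.lift_natCast, Nat.cast_le] at h1
  omega

/-- The values `B v w`, `v ≠ 0`, of a bilinear map `V × W → K^N` with `dim V + dim W ≤ N` lie on a
hypersurface (empty if `V = 0`).
The rescaling `(v, w) ↦ (s⁻¹ v, s w)` does not change the value, so one coordinate of `v` may be
normalised to `1` and only `dim V + dim W - 1` parameters remain; the hypersurface is the union
over the possible choices of the normalised coordinate. -/
lemma exists_hypersurface {K : Type} [Field K] {V W : Type} [AddCommGroup V] [Module K V]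
    [AddCommGroup W] [Module K W] [FiniteDimensional K V] [FiniteDimensional K W] {N : ℕ}
    (B : V →ₗ[K] W →ₗ[K] (Fin N → K)) (hd : finrank K V + finrank K W ≤ N) :
    ∃ P : MvPolynomial (Fin N) K, P ≠ 0 ∧ ∀ v ≠ 0, ∀ w, eval (B v w) P = 0 := by
  classical
  let bV := finBasis K V
  let bW := finBasis K W
  have key : ∀ i : Fin (finrank K V), ∃ P : MvPolynomial (Fin N) K, P ≠ 0 ∧
      ∀ v, bV.repr v i ≠ 0 → ∀ w, eval (B v w) P = 0 := by
    intro i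
    let τ := {j : Fin (finrank K V) // j ≠ i} ⊕ Fin (finrank K W)
    -- Coordinates of a generic `v` whose `i`-th coordinate is `1`; `f` is then `B v w` for generic
    -- `w`, written in these parameters.
    let cV : Fin (finrank K V) → MvPolynomial τ K :=
      fun j => if h : j = i then 1 else X (Sum.inl ⟨j, h⟩)
    let f : Fin N → MvPolynomial τ K := fun l =>
      ∑ j, ∑ k, C (B (bV j) (bW k) l) * cV j * X (Sum.inr k)
    have hcard : Fintype.card τ < N := by
      have h0 : 0 < finrank K V := i.pos
      have : Fintype.card τ = (finrank K V - 1) + finrank K W := by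
        simp [τ, Fintype.card_subtype_compl]
      omega
    obtain ⟨P, hP, hP0⟩ := exists_relation hcard f
    refine ⟨P, hP, fun v hv w => ?_⟩
    let s := bV.repr v i
    let x : τ → K := Sum.elim (fun j => bV.repr v j / s) (fun k => s * bW.repr w k)
    have hcV : ∀ j, eval x (cV j) = bV.repr v j / s := by
      intro j
      by_cases h : j = i
      · subst h; simp [cV, s, div_self hv]
      · simp [cV, h, x]
    have hf : ∀ l, eval x (f l) = B v w l := by
      intro l
      conv_rhs => rw [← bV.sum_repr v, ← bW.sum_repr w]
      simp only [f, map_sum, map_mul, eval_C, eval_X, hcV, map_smul, LinearMap.sum_apply,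
        LinearMap.smul_apply, Finset.sum_apply, Pi.smul_apply, smul_eq_mul]
      rw [Finset.sum_comm]
      refine Finset.sum_congr rfl fun k _ => ?_
      rw [Finset.mul_sum]
      refine Finset.sum_congr rfl fun j _ => ?_
      have hs : s ≠ 0 := hv
      simp only [x, Sum.elim_inr]
      field_simp
    have h2 := congrArg (eval x) hP0
    rw [map_zero, aeval_def, algebraMap_eq, ← coe_eval₂Hom, ← RingHom.comp_apply] at h2
    have h3 : (eval x).comp (eval₂Hom C f) = eval (B v w) := by
      apply MvPolynomial.ringHom_ext
      · intro r; simp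
      · intro l; simp [hf]
    rwa [h3] at h2
  choose P hP hP0 using key
  refine ⟨∏ i, P i, Finset.prod_ne_zero_iff.mpr fun i _ => hP i, fun v hv w => ?_⟩
  obtain ⟨i, hi⟩ : ∃ i, bV.repr v i ≠ 0 := by
    by_contra! h
    exact hv (bV.repr.map_eq_zero_iff.mp (Finsupp.ext h))
  rw [map_prod]
  exact Finset.prod_eq_zero (Finset.mem_univ i) (hP0 i v hi w)

/-! ### Dimensions of spaces of forms -/

instance {K : Type} [Field K] (n m : ℕ) :
    FiniteDimensional K (homogeneousSubmodule (Fin (n+1)) K m) :=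
  .of_fg (homogeneousSubmodule_fg _ _ m)

instance {K : Type} [Field K] (n : ℕ) (Z : Finset (Fin (n+1) → K)) (m : ℕ) :
    FiniteDimensional K (IZcomp n Z m) :=
  Submodule.finiteDimensional_of_le (inf_le_left : _ ≤ homogeneousSubmodule (Fin (n+1)) K m)

lemma finrank_homogeneousSubmodule (K : Type) [Field K] (n m : ℕ) :
    finrank K (homogeneousSubmodule (Fin (n+1)) K m) = (n + m).choose n := by
  classical
  have hset : {d : Fin (n+1) →₀ ℕ | d.degree = m} =
      ((Finset.univ : Finset (Fin (n+1))).finsuppAntidiag m : Set (Fin (n+1) →₀ ℕ)) := by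
    ext d
    simp [Finsupp.degree_eq_sum]
  rw [homogeneousSubmodule_eq_finsupp_supported, hset,
    (AddMonoidAlgebra.supportedEquivFinsupp _).finrank_eq, finrank_finsupp_self]
  simp only [Finset.coe_sort_coe, Fintype.card_coe, Finset.card_finsuppAntidiag_nat_eq_choose,
    Finset.card_univ, Fintype.card_fin]
  rw [show n + 1 + m - 1 = n + m by omega, Nat.choose_symm_add]

/-- `dim S_b + dim S_c ≤ dim S_{b+c}`; this is where `n ≥ 2` enters. -/
lemma choose_add_choose_le {n b c : ℕ} (hn : 2 ≤ n) (hb : 1 ≤ b) (hc : 1 ≤ c) :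
    (n + b).choose n + (n + c).choose n ≤ (n + (b + c)).choose n := by
  obtain ⟨k, rfl⟩ : ∃ k, n = k + 2 := ⟨n - 2, by omega⟩
  induction b, hb using Nat.le_induction with
  | base =>
    have h0 : (k + 2 + (1 + c)).choose (k + 2) =
        (k + 2 + c).choose (k + 1) + (k + 2 + c).choose (k + 2) := by
      rw [show k + 2 + (1 + c) = (k + 2 + c) + 1 by ring]
      exact Nat.choose_succ_succ _ _
    have h1 : (k + 3).choose (k + 1) ≤ (k + 2 + c).choose (k + 1) :=
      Nat.choose_le_choose _ (by omega)
    have h2 : (k + 3).choose (k + 1) = (k + 2).choose k + (k + 2) := by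
      rw [Nat.choose_succ_succ' (k + 2) k, Nat.choose_succ_self_right]
    have h3 : 0 < (k + 2).choose k := Nat.choose_pos (by omega)
    have h4 : (k + 2 + 1).choose (k + 2) = k + 3 := Nat.choose_succ_self_right _
    omega
  | succ b hb ih =>
    have e1 : (k + 2 + (b + 1)).choose (k + 2) =
        (k + 2 + b).choose (k + 1) + (k + 2 + b).choose (k + 2) :=
      Nat.choose_succ_succ (k + 2 + b) (k + 1)
    have e2 : (k + 2 + (b + 1 + c)).choose (k + 2) =
        (k + 2 + (b + c)).choose (k + 1) + (k + 2 + (b + c)).choose (k + 2) := by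
      rw [show k + 2 + (b + 1 + c) = (k + 2 + (b + c)) + 1 by ring]
      exact Nat.choose_succ_succ _ _
    have h1 : (k + 2 + b).choose (k + 1) ≤ (k + 2 + (b + c)).choose (k + 1) :=
      Nat.choose_le_choose _ (by omega)
    omega

/-! ### Factors of a homogeneous polynomial -/

/-- If `G * H` is homogeneous of degree `deg G + deg H`, it is the product of the top-degree parts of
its factors. -/
lemma mul_eq_top_mul_top {K σ : Type} [Field K] {G H : MvPolynomial σ K}
    (h : (G * H).IsHomogeneous (G.totalDegree + H.totalDegree)) :
    G * H = homogeneousComponent G.totalDegree G * homogeneousComponent H.totalDegree H := by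
  classical
  ext d
  by_cases hd : d.degree = G.totalDegree + H.totalDegree
  · rw [coeff_mul, coeff_mul]
    refine Finset.sum_congr rfl fun x hx => ?_
    rw [Finset.HasAntidiagonal.mem_antidiagonal] at hx
    have hdeg : x.1.degree + x.2.degree = G.totalDegree + H.totalDegree := by
      rw [← hd, ← hx, map_add]
    rw [coeff_homogeneousComponent, coeff_homogeneousComponent]
    rcases lt_trichotomy x.1.degree G.totalDegree with h1 | h1 | h1
    · have : coeff x.2 H = 0 :=
        coeff_eq_zero_of_totalDegree_lt (by rw [← Finsupp.degree_apply]; omega)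
      simp [this]
    · have h2 : x.2.degree = H.totalDegree := by omega
      simp [h1, h2]
    · have : coeff x.1 G = 0 :=
        coeff_eq_zero_of_totalDegree_lt (by rw [← Finsupp.degree_apply]; omega)
      simp [this]
  · rw [h.coeff_eq_zero hd, ((homogeneousComponent_isHomogeneous _ _).mul
      (homogeneousComponent_isHomogeneous _ _)).coeff_eq_zero hd]

/-- A nonzero form of positive degree that is not irreducible is a product of two forms of
positive degree. -/
lemma exists_homogeneous_factors {K σ : Type} [Field K] {a : ℕ} (ha : a ≠ 0)
    {F : MvPolynomial σ K} (hF : F.IsHomogeneous a) (hF0 : F ≠ 0) (hirr : ¬ Irreducible F) :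
    ∃ b c : ℕ, 1 ≤ b ∧ 1 ≤ c ∧ b + c = a ∧ ∃ G H : MvPolynomial σ K,
      G.IsHomogeneous b ∧ H.IsHomogeneous c ∧ F = G * H := by
  have hunit : ∀ P : MvPolynomial σ K, P ≠ 0 → P.totalDegree = 0 → IsUnit P := by
    intro P hP h
    rw [totalDegree_eq_zero_iff_eq_C] at h
    rw [h] at hP ⊢
    exact (isUnit_iff_ne_zero.mpr fun h0 => hP (by rw [h0, C_0])).map C
  have hnu : ¬ IsUnit F := by
    intro hu
    have := (isUnit_iff_totalDegree_of_isReduced.mp hu).2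
    rw [hF.totalDegree hF0] at this
    exact ha this
  rw [irreducible_iff] at hirr
  push Not at hirr
  obtain ⟨G, H, hGH, hG, hH⟩ := hirr hnu
  have hG0 : G ≠ 0 := by rintro rfl; simp [hGH] at hF0
  have hH0 : H ≠ 0 := by rintro rfl; simp [hGH] at hF0
  have hdeg : G.totalDegree + H.totalDegree = a := by
    rw [← totalDegree_mul_of_isDomain hG0 hH0, ← hGH, hF.totalDegree hF0]
  refine ⟨G.totalDegree, H.totalDegree, ?_, ?_, hdeg, _, _,
    homogeneousComponent_isHomogeneous _ G, homogeneousComponent_isHomogeneous _ H, ?_⟩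
  · exact Nat.one_le_iff_ne_zero.mpr fun h => hG (hunit G hG0 h)
  · exact Nat.one_le_iff_ne_zero.mpr fun h => hH (hunit H hH0 h)
  · rw [hGH]
    apply mul_eq_top_mul_top
    rwa [hdeg, ← hGH]

/-! ### Forms vanishing on a set in uniform position -/

lemma mem_IZcomp {K : Type} [Field K] {n : ℕ} {Z : Finset (Fin (n+1) → K)} {m : ℕ}
    {F : MvPolynomial (Fin (n+1)) K} :
    F ∈ IZcomp n Z m ↔ F.IsHomogeneous m ∧ ∀ v ∈ Z, eval v F = 0 := by
  simp [IZcomp, Submodule.mem_iInf, aeval_eq_eval]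

lemma finrank_IZcomp_add_hfun {K : Type} [Field K] (n : ℕ) (Z : Finset (Fin (n+1) → K)) (m : ℕ) :
    finrank K (IZcomp n Z m) + hfun n Z m = (n + m).choose n := by
  have h : finrank K (IZcomp n Z m) ≤ finrank K (homogeneousSubmodule (Fin (n+1)) K m) :=
    Submodule.finrank_mono inf_le_left
  rw [← finrank_homogeneousSubmodule K, hfun]
  omega

/-- If `[I_Z]_b = 0` but `[I_Y]_b ≠ 0`, uniform position makes the points of `Y` impose
independent conditions in degree `b`. -/
lemma finrank_IZcomp_add_card {K : Type} [Field K] {n : ℕ} {Z Y : Finset (Fin (n+1) → K)}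
    (hUPP : UPP n Z) (hY : Y ⊆ Z) {b : ℕ} (hb : IZcomp n Z b = ⊥) (hne : IZcomp n Y b ≠ ⊥) :
    finrank K (IZcomp n Y b) + Y.card = (n + b).choose n := by
  have h1 := finrank_IZcomp_add_hfun n Y b
  have h2 := finrank_IZcomp_add_hfun n Z b
  have h3 := hUPP b Y hY
  have h4 : finrank K (IZcomp n Y b) ≠ 0 := fun h => hne (Submodule.finrank_eq_zero.mp h)
  rw [hb, finrank_bot] at h2
  omega

/-- If `Z` is a finite nonempty set of points of `ℙⁿ(K)`, `n ≥ 2`, with the Uniform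
Position Property, and `a` is the least degree in which `I_Z` is nonzero, then
`[I_Z]_a` contains an irreducible form. -/
theorem stmt_0 {K : Type} [Field K] [IsAlgClosed K] [CharZero K]
    (n : ℕ) (hn : 2 ≤ n) (Z : Finset (Fin (n+1) → K)) (hZne : Z.Nonempty)
    (hZ0 : ∀ v ∈ Z, v ≠ 0)
    (hZdist : ∀ v ∈ Z, ∀ w ∈ Z, v ≠ w → ∀ c : K, w ≠ c • v)
    (hUPP : UPP n Z)
    (a : ℕ) (ha : IsLeast {ℓ : ℕ | IZcomp n Z ℓ ≠ ⊥} a) :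
    ∃ F ∈ IZcomp n Z a, Irreducible F := by
  classical
  have hbelow : ∀ b < a, IZcomp n Z b = ⊥ := by
    intro b hb
    by_contra h
    exact absurd (ha.2 h) (by omega)
  have hUne : IZcomp n Z a ≠ ⊥ := ha.1
  have ha0 : a ≠ 0 := by
    rintro rfl
    apply hUne
    rw [eq_bot_iff]
    intro F hF
    obtain ⟨hF1, hF2⟩ := mem_IZcomp.mp hF
    obtain ⟨v, hv⟩ := hZne
    have h := hF2 v hv
    rw [totalDegree_eq_zero_iff_eq_C.mp (Nat.le_zero.mp hF1.totalDegree_le)] at h ⊢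
    rw [eval_C] at h
    simp [h]
  let N := finrank K (IZcomp n Z a)
  have hN0 : 0 < N := Nat.pos_of_ne_zero fun h => hUne (Submodule.finrank_eq_zero.mp h)
  have hN : (n + a).choose n ≤ N + Z.card := by
    have h1 := finrank_IZcomp_add_hfun n Z a
    have h2 := hUPP a Z subset_rfl
    omega
  let e : IZcomp n Z a ≃ₗ[K] (Fin N → K) := (finBasis K (IZcomp n Z a)).equivFun
  -- A linear extension of the coordinates to all of `S`, so that products need not be
  -- known in advance to lie in `[I_Z]_a`.
  obtain ⟨r, hr⟩ := (IZcomp n Z a).subtype.exists_leftInverse_of_injective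
    (Submodule.ker_subtype _)
  let φ : MvPolynomial (Fin (n+1)) K →ₗ[K] (Fin N → K) := e.toLinearMap ∘ₗ r
  have hφ : ∀ u : IZcomp n Z a, φ u = e u := by
    intro u
    have := LinearMap.congr_fun hr u
    simpa [φ] using this
  have key : ∀ b : ℕ, ∀ Y : Finset (Fin (n+1) → K), ∃ P : MvPolynomial (Fin N) K, P ≠ 0 ∧
      (Y ⊆ Z → 1 ≤ b → b < a → ∀ G ∈ IZcomp n Y b, ∀ H ∈ IZcomp n (Z \ Y) (a - b),
        G ≠ 0 → H ≠ 0 → eval (φ (G * H)) P = 0) := by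
    intro b Y
    by_cases hgood : (Y ⊆ Z ∧ 1 ≤ b ∧ b < a) ∧ IZcomp n Y b ≠ ⊥ ∧ IZcomp n (Z \ Y) (a - b) ≠ ⊥
    · obtain ⟨⟨hY, hb1, hba⟩, hV, hW⟩ := hgood
      have d1 := finrank_IZcomp_add_card hUPP hY (hbelow b hba) hV
      have d2 := finrank_IZcomp_add_card hUPP Finset.sdiff_subset (hbelow (a - b) (by omega)) hW
      have d3 := choose_add_choose_le (c := a - b) hn hb1 (by omega)
      have d4 := Finset.card_sdiff_add_card_eq_card hY
      rw [show b + (a - b) = a by omega] at d3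
      obtain ⟨P, hP, hP0⟩ := exists_hypersurface (N := N)
        (((LinearMap.mul K (MvPolynomial (Fin (n+1)) K)).compr₂ φ).domRestrict₁₂
          (IZcomp n Y b) (IZcomp n (Z \ Y) (a - b))) (by omega)
      refine ⟨P, hP, fun _ _ _ G hG H hH hG0 _ => ?_⟩
      exact hP0 ⟨G, hG⟩ (fun h => hG0 (congrArg Subtype.val h)) ⟨H, hH⟩
    · refine ⟨1, one_ne_zero, fun hY hb1 hba G hG H hH hG0 hH0 =>
        absurd ⟨⟨hY, hb1, hba⟩, ?_, ?_⟩ hgood⟩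
      · exact fun h => hG0 (by simpa [h] using hG)
      · exact fun h => hH0 (by simpa [h] using hH)
  choose P hP hP0 using key
  -- `Q` vanishes on every reducible form and at zero; the extra variable takes care of zero.
  let Q : MvPolynomial (Fin N) K :=
    X ⟨0, hN0⟩ * ∏ b ∈ Finset.range a, ∏ Y ∈ Z.powerset, P b Y
  have hQ : Q ≠ 0 := mul_ne_zero (X_ne_zero _)
    (Finset.prod_ne_zero_iff.mpr fun b _ => Finset.prod_ne_zero_iff.mpr fun Y _ => hP b Y)
  obtain ⟨x, hx⟩ : ∃ x, eval x Q ≠ 0 := by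
    by_contra! h
    exact hQ (MvPolynomial.funext fun x => by rw [h x, map_zero])
  have hφx : φ (e.symm x : IZcomp n Z a) = x := by rw [hφ, e.apply_symm_apply]
  obtain ⟨hhom, hvan⟩ := mem_IZcomp.mp (e.symm x).2
  generalize ((e.symm x : IZcomp n Z a) : MvPolynomial (Fin (n+1)) K) = F at hφx hhom hvan
  have hF0 : F ≠ 0 := by
    rintro rfl
    apply hx
    simp [Q, ← hφx]
  refine ⟨F, mem_IZcomp.mpr ⟨hhom, hvan⟩, ?_⟩
  by_contra hirr
  obtain ⟨b, c, hb, hc, hbc, G, H, hG, hH, hGH⟩ := exists_homogeneous_factors ha0 hhom hF0 hirr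
  have hG0 : G ≠ 0 := by rintro rfl; simp [hGH] at hF0
  have hH0 : H ≠ 0 := by rintro rfl; simp [hGH] at hF0
  let Y := Z.filter fun v => eval v G = 0
  have hGY : G ∈ IZcomp n Y b := mem_IZcomp.mpr ⟨hG, fun v hv => (Finset.mem_filter.mp hv).2⟩
  have hHY : H ∈ IZcomp n (Z \ Y) (a - b) := by
    refine mem_IZcomp.mpr ⟨by rwa [show a - b = c by omega], fun v hv => ?_⟩
    rw [Finset.mem_sdiff, Finset.mem_filter] at hv
    have h := hvan v hv.1
    rw [hGH, map_mul] at h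
    exact (mul_eq_zero.mp h).resolve_left fun h' => hv.2 ⟨hv.1, h'⟩
  have hPx := hP0 b Y (Finset.filter_subset _ _) hb (by omega) G hGY H hHY hG0 hH0
  rw [← hGH, hφx] at hPx
  apply hx
  simp only [Q, map_mul, map_prod]
  rw [Finset.prod_eq_zero (Finset.mem_range.mpr (show b < a by omega))
    (Finset.prod_eq_zero (Finset.mem_powerset.mpr (Finset.filter_subset _ _)) hPx), mul_zero]
end
end

section
/- Let Z be a finite nonempty set of points of ℙⁿ(K) with n ≥ 2 having the Uniform Position Property. Let a be the least degree with [I_Z]_a ≠ 0 and let b be the least degree with dim_K [I_Z]_b > binom(b − a + n, n). Then: (1) for every t with a < t < b, every nonzero form in [I_Z]_t is reducible; (2) [I_Z]_a contains an irreducible form, and for every t ≥ b the space [I_Z]_t contains an irreducible form. (Parts (2) are the existential consequences of the paper's statement that a general element of [I_Z]_t is irreducible exactly when t = a or t ≥ b.) -/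
/-!
Write `S_d` for the forms of degree `d`, `s_d = dim S_d = (d + n).choose n` and `u_d = dim [I_Z]_d`.

For `a < t < b` one has `u_t ≤ s_{t-a}`, so `[I_Z]_t = P S_{t-a}` for a nonzero `P ∈ [I_Z]_a`, and
every form in it is reducible (`not_irreducible_of_lt`).

For `t = a` or `t ≥ b`, the existence of an irreducible form is a dimension count instead of an
application of Bertini's theorem. A reducible form of `[I_Z]_t` is a product `G H` of forms of
degrees `d + e = t` vanishing on `Y₁`, `Y₂` with `Y₁ ∪ Y₂ = Z`. For fixed `(d, Y₁, Y₂)` such products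
depend on `dim [I_{Y₁}]_d + dim [I_{Y₂}]_e - 1` parameters; if this is less than `u_t` for each of
the finitely many triples, algebraic dependence gives a nonzero polynomial on `[I_Z]_t` vanishing
on all products (`exists_not_product`). The required inequality comes from the Uniform Position
Property (`exists_irreducible_of_UPP`):

* if `Y₁` and `Y₂` impose independent conditions in degrees `d` and `e`, it reduces to
  `s_d + s_e - 1 < s_t`, which holds since `n ≥ 2`;
* otherwise, say, `[I_{Y₁}]_d` has dimension `u_d`; then `d ≥ a`, and `u_d + s_e - 1 < u_t` is needed
  (`dim_bound`). It follows from the fact that `u_{a+k} - s_k` is nondecreasing in `k` (`growth`), and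
  increases strictly from `k = 0` to `k = 1` when `u_a ≥ 2` (`strict_growth`). Both are seen by
  comparing `[I_Z]_{a+k+1}` with `l [I_Z]_{a+k} + F S_{k+1}`, where `F ∈ [I_Z]_a` is nonzero and `l`
  is a linear form vanishing at no point of `Z`.
-/

open MvPolynomial Module

noncomputable section

variable {K : Type} [Field K]

/-! ### Forms and their factors -/

theorem finrank_homog (n l : ℕ) :
    finrank K (homogeneousSubmodule (Fin (n+1)) K l) = (l + n).choose n := by
  classical
  rw [homogeneousSubmodule_eq_finsupp_supported]
  have hset : {d : Fin (n+1) →₀ ℕ | d.degree = l} =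
      ↑(Finset.finsuppAntidiag (Finset.univ : Finset (Fin (n+1))) l) := by
    ext d
    simp [Finsupp.degree_eq_sum]
  rw [hset]
  have e := (AddMonoidAlgebra.supportedEquivFinsupp (S := K) (R := K)
    (↑(Finset.finsuppAntidiag (Finset.univ : Finset (Fin (n+1))) l) : Set (Fin (n+1) →₀ ℕ)))
  refine e.finrank_eq.trans ?_
  rw [finrank_finsupp_self]
  simp only [Fintype.card_coe, SetLike.coe_sort_coe]
  rw [Finset.card_finsuppAntidiag_nat_eq_choose]
  simp only [Finset.card_univ, Fintype.card_fin]
  rw [show n + 1 + l - 1 = l + n by omega]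
  exact Nat.choose_symm_add

instance fin_homog (n l : ℕ) : FiniteDimensional K (homogeneousSubmodule (Fin (n+1)) K l) := by
  exact Module.Finite.iff_fg.mpr (homogeneousSubmodule_fg (R := K) (σ := Fin (n+1)) l)

/-- The substitution `X i ↦ X i * T`, which records the degree in the exponent of `T`. -/
def gradeHom (n : ℕ) : MvPolynomial (Fin (n+1)) K →ₐ[K]
    Polynomial (MvPolynomial (Fin (n+1)) K) :=
  aeval fun i => Polynomial.C (X i) * Polynomial.X

theorem coeff_gradeHom (n : ℕ) (G : MvPolynomial (Fin (n+1)) K) (k : ℕ) :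
    (gradeHom n G).coeff k = homogeneousComponent k G := by
  induction G using MvPolynomial.induction_on' with
  | monomial d c =>
    have h1 : gradeHom n (monomial d c) =
        Polynomial.C (monomial d c) * Polynomial.X ^ d.degree := by
      rw [gradeHom, aeval_monomial, Finsupp.prod]
      simp only [mul_pow, Finset.prod_mul_distrib, Finset.prod_pow_eq_pow_sum]
      rw [monomial_eq, Finsupp.prod]
      simp only [map_mul, map_prod, map_pow, mul_assoc]
      rfl
    rw [h1, Polynomial.coeff_C_mul_X_pow,
      homogeneousComponent_of_mem (isHomogeneous_monomial c rfl)]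
  | add p q hp hq => simp [hp, hq]

/-- The factors of a nonzero form are forms: under `X i ↦ X i * T` a form becomes a monomial
in `T`, and in a domain the factors of a monomial are monomials. -/
theorem homog_factor (n t : ℕ) {F G H : MvPolynomial (Fin (n+1)) K} (hF : F.IsHomogeneous t)
    (h0 : F ≠ 0) (hFG : F = G * H) : ∃ d e, d + e = t ∧ G.IsHomogeneous d ∧ H.IsHomogeneous e := by
  have hinj : ∀ P : MvPolynomial (Fin (n+1)) K, P ≠ 0 → gradeHom n P ≠ 0 := by
    intro P hP h
    apply hP
    rw [← sum_homogeneousComponent P]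
    simp only [← coeff_gradeHom, h, Polynomial.coeff_zero, Finset.sum_const_zero]
  have hG0 : G ≠ 0 := by rintro rfl; simp_all
  have hH0 : H ≠ 0 := by rintro rfl; simp_all
  have hmon : gradeHom n F = Polynomial.C F * Polynomial.X ^ t := by
    ext1 k
    rw [coeff_gradeHom, Polynomial.coeff_C_mul_X_pow, homogeneousComponent_of_mem hF]
  have hd : (gradeHom n G).natDegree + (gradeHom n H).natDegree = t := by
    rw [← Polynomial.natDegree_mul (hinj _ hG0) (hinj _ hH0), ← map_mul, ← hFG, hmon,
      Polynomial.natDegree_C_mul_X_pow _ _ h0]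
  have htr : (gradeHom n G).natTrailingDegree + (gradeHom n H).natTrailingDegree = t := by
    rw [← Polynomial.natTrailingDegree_mul (hinj _ hG0) (hinj _ hH0), ← map_mul, ← hFG, hmon,
      Polynomial.C_mul_X_pow_eq_monomial, Polynomial.natTrailingDegree_monomial h0]
  have key : ∀ P : MvPolynomial (Fin (n+1)) K,
      (gradeHom n P).natDegree ≤ (gradeHom n P).natTrailingDegree →
      P.IsHomogeneous (gradeHom n P).natDegree := by
    intro P hP
    have : P = homogeneousComponent (gradeHom n P).natDegree P := by
      conv_lhs => rw [← sum_homogeneousComponent P]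
      have hz : ∀ k, k ≠ (gradeHom n P).natDegree → homogeneousComponent k P = 0 := by
        intro k hk
        rw [← coeff_gradeHom]
        rcases lt_or_gt_of_ne hk with h | h
        · exact Polynomial.coeff_eq_zero_of_lt_natTrailingDegree (h.trans_le hP)
        · exact Polynomial.coeff_eq_zero_of_natDegree_lt h
      apply Finset.sum_eq_single
      · intro k _ hk; exact hz k hk
      · intro h
        apply homogeneousComponent_eq_zero
        simpa using h
    rw [this]
    convert homogeneousComponent_isHomogeneous _ P using 2
    rw [← this]
  have h1 := (gradeHom n G).natTrailingDegree_le_natDegree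
  have h2 := (gradeHom n H).natTrailingDegree_le_natDegree
  exact ⟨_, _, hd, key G (by omega), key H (by omega)⟩

theorem isUnit_of_homog_zero (n : ℕ) {G : MvPolynomial (Fin (n+1)) K} (h : G.IsHomogeneous 0)
    (h0 : G ≠ 0) : IsUnit G := by
  rw [← totalDegree_zero_iff_isHomogeneous] at h
  rw [totalDegree_eq_zero_iff_eq_C] at h
  rw [h]
  apply IsUnit.map
  rw [isUnit_iff_ne_zero]
  intro h'
  rw [h', C_0] at h
  exact h0 h

/-! ### Products do not fill a space of large dimension -/

/-- More polynomials than variables are algebraically dependent. -/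
theorem exists_relation_s1 {m N : ℕ} (h : m < N) (Q : Fin N → MvPolynomial (Fin m) K) :
    ∃ P : MvPolynomial (Fin N) K, P ≠ 0 ∧ aeval Q P = 0 := by
  by_contra hcon
  have hinj : AlgebraicIndependent K Q := by
    rw [algebraicIndependent_iff]
    intro p hp
    by_contra h0
    exact hcon ⟨p, h0, hp⟩
  have := hinj.lift_cardinalMk_le_trdeg
  rw [MvPolynomial.trdeg_of_isDomain] at this
  simp at this
  omega

theorem exists_avoid {ι : Type*} [Finite ι] {N : ℕ} [Infinite K] (P : ι → MvPolynomial (Fin N) K)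
    (hP : ∀ i, P i ≠ 0) : ∃ c : Fin N → K, ∀ i, eval c (P i) ≠ 0 := by
  have := Fintype.ofFinite ι
  have h : ∏ i, P i ≠ 0 := Finset.prod_ne_zero_iff.mpr fun i _ => hP i
  by_contra hcon
  apply h
  apply MvPolynomial.funext
  intro c
  push Not at hcon
  obtain ⟨i, hi⟩ := hcon c
  rw [map_prod, map_zero]
  exact Finset.prod_eq_zero (Finset.mem_univ i) hi

/-- Products `G * H`, with `G` and `H` in the spans of `p + 1` and `q` elements, satisfy one common
polynomial relation in `N > p + q` linear coordinates, as long as the coordinate `g i₀` of `G` is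
nonzero: scaling `G` to have `g i₀ = 1` leaves only `p + q` parameters. -/
theorem exists_relation_chart {R : Type} [CommRing R] [Algebra K R] {p q N : ℕ} (h : p + q < N)
    (α : Fin (p+1) → R) (β : Fin q → R) (i₀ : Fin (p+1)) (lam : Fin N → R →ₗ[K] K) :
    ∃ P : MvPolynomial (Fin N) K, P ≠ 0 ∧ ∀ (g : Fin (p+1) → K) (h : Fin q → K), g i₀ ≠ 0 →
      eval (fun k => lam k ((∑ i, g i • α i) * ∑ j, h j • β j)) P = 0 := by
  classical
  let g' : Fin (p+1) → MvPolynomial (Fin (p+q)) K :=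
    i₀.insertNth 1 fun i => X (Fin.castAdd q i)
  let Q : Fin N → MvPolynomial (Fin (p+q)) K := fun k =>
    ∑ i, ∑ j, C (lam k (α i * β j)) * g' i * X (Fin.natAdd p j)
  obtain ⟨P, hP, hQ⟩ := exists_relation_s1 h Q
  refine ⟨P, hP, fun g h hg => ?_⟩
  -- the normalization `G * H = ((g i₀)⁻¹ • G) * (g i₀ • H)`
  let c : Fin (p+q) → K := Fin.append (fun i => (g i₀)⁻¹ * g (i₀.succAbove i)) (fun j => g i₀ * h j)
  have hc : ∀ i, eval c (g' i) = (g i₀)⁻¹ * g i := by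
    intro i
    refine Fin.succAboveCases i₀ ?_ (fun i => ?_) i
    · simp [g', hg]
    · simp [g', c]
  have hcQ : ∀ k, eval c (Q k) = lam k ((∑ i, g i • α i) * ∑ j, h j • β j) := by
    intro k
    rw [Finset.sum_mul_sum]
    simp only [Q, map_sum, map_mul, hc, eval_C, eval_X]
    refine Finset.sum_congr rfl fun i _ => Finset.sum_congr rfl fun j _ => ?_
    rw [smul_mul_smul_comm, map_smul, smul_eq_mul]
    simp only [c, Fin.append_right]
    field_simp
  have := congrArg (eval c) hQ
  rw [map_zero, aeval_def, eval_eval₂] at this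
  simp only [← hcQ]
  rw [← this]
  rw [eval, eval₂Hom]
  simp only [RingHom.coe_mk, MonoidHom.coe_mk, OneHom.coe_mk]
  congr 1
  ext; simp

/-- Dimension count: products from `A i × B i` fill a variety of dimension at most
`dim A i + dim B i - 1`, so finitely many such families cannot cover `V` when
`dim A i + dim B i ≤ dim V` for each of them. -/
theorem exists_not_product {R : Type} [CommRing R] [Algebra K R] [Infinite K]
    {ι : Type} [Finite ι] (V : Submodule K R) [FiniteDimensional K V] (hV : V ≠ ⊥)
    (A B : ι → Submodule K R) [∀ i, FiniteDimensional K (A i)] [∀ i, FiniteDimensional K (B i)]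
    (h : ∀ i, finrank K (A i) + finrank K (B i) ≤ finrank K V) :
    ∃ F ∈ V, F ≠ 0 ∧ ∀ i, ∀ G ∈ A i, ∀ H ∈ B i, F ≠ G * H := by
  classical
  obtain ⟨N, hN⟩ : ∃ N, N = finrank K V := ⟨_, rfl⟩
  let bV := (finBasis K V).reindex (finCongr hN.symm)
  obtain ⟨π, hπ⟩ := V.exists_isCompl
  -- coordinates on `V`, extended linearly to all of `R`
  let lam : Fin N → R →ₗ[K] K := fun k => bV.coord k ∘ₗ V.projectionOnto π hπ
  have hlam : ∀ k (v : V), lam k v = bV.repr v k := by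
    intro k v
    have : V.projectionOnto π hπ v = v := by simp
    simp only [lam, LinearMap.comp_apply, this, Basis.coord_apply]
  -- one relation for every pair of subspaces and every chart of the first factor
  have key : ∀ x : Σ i, Fin (finrank K (A i)), ∃ P : MvPolynomial (Fin N) K, P ≠ 0 ∧
      ∀ G : A x.1, ∀ H ∈ B x.1, (finBasis K (A x.1)).repr G x.2 ≠ 0 →
        eval (fun k => lam k (G * H)) P = 0 := by
    rintro ⟨i, j⟩
    obtain ⟨p, hp⟩ : ∃ p, p + 1 = finrank K (A i) := ⟨finrank K (A i) - 1, by have := j.2; omega⟩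
    let bA := finBasis K (A i)
    let bB := finBasis K (B i)
    have hi := h i
    obtain ⟨P, hP, hPe⟩ := exists_relation_chart (K := K) (R := R) (p := p)
      (q := finrank K (B i)) (N := N) (by omega)
      (fun k => (bA (finCongr hp k) : R)) (fun k => (bB k : R)) (finCongr hp.symm j) lam
    refine ⟨P, hP, fun G H hH hG => ?_⟩
    have := hPe (fun k => bA.repr G (finCongr hp k)) (fun k => bB.repr ⟨H, hH⟩ k) (by simpa using hG)
    have h1 : ∑ k, bA.repr G (finCongr hp k) • (bA (finCongr hp k) : R) = G := by
      rw [Equiv.sum_comp (finCongr hp) (fun k => bA.repr G k • (bA k : R))]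
      have := congrArg Subtype.val (bA.sum_repr G)
      simpa only [Submodule.coe_sum, Submodule.coe_smul] using this
    have h2 : ∑ k, bB.repr ⟨H, hH⟩ k • (bB k : R) = H := by
      have := congrArg Subtype.val (bB.sum_repr ⟨H, hH⟩)
      simpa only [Submodule.coe_sum, Submodule.coe_smul] using this
    rw [h1, h2] at this
    exact this
  choose P hP hPe using key
  have hNpos : 0 < N := by
    rw [hN]
    exact Nat.pos_of_ne_zero fun h0 => hV (Submodule.finrank_eq_zero.mp h0)
  -- the extra polynomial `X 0` forces the chosen vector to be nonzero
  obtain ⟨c, hc⟩ := exists_avoid (fun o : Option (Σ i, Fin (finrank K (A i))) =>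
    o.elim (X ⟨0, hNpos⟩) P) (by rintro (_ | x); exacts [X_ne_zero _, hP x])
  let F : V := bV.equivFun.symm c
  have hF : ∀ k, lam k F = c k := by
    intro k
    rw [hlam]
    exact congrFun (bV.equivFun.apply_symm_apply c) k
  have hF0 : (F : R) ≠ 0 := by
    intro h0
    apply hc none
    simp [← hF, h0]
  refine ⟨F, F.2, hF0, fun i G hG H hH hGH => ?_⟩
  have hG0 : (⟨G, hG⟩ : A i) ≠ 0 := by
    intro h0
    have : G = 0 := congrArg Subtype.val h0
    apply hF0
    rw [hGH, this, zero_mul]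
  obtain ⟨j, hj⟩ : ∃ j, (finBasis K (A i)).repr ⟨G, hG⟩ j ≠ 0 := by
    by_contra hcon
    push Not at hcon
    apply hG0
    apply (finBasis K (A i)).repr.injective
    ext j
    simp [hcon]
  apply hc (some ⟨i, j⟩)
  have := hPe ⟨i, j⟩ ⟨G, hG⟩ H hH hj
  rw [← hGH] at this
  simp only [hF] at this
  exact this

/-! ### Growth of the ideal of a finite set of points -/

theorem mem_IZ {n : ℕ} {Z : Finset (Fin (n+1) → K)} {l : ℕ} {F : MvPolynomial (Fin (n+1)) K} :
    F ∈ IZcomp n Z l ↔ F.IsHomogeneous l ∧ ∀ v ∈ Z, eval v F = 0 := by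
  simp [IZcomp, mem_homogeneousSubmodule, aeval_eq_eval]

instance fin_IZ (n : ℕ) (Z : Finset (Fin (n+1) → K)) (l : ℕ) :
    FiniteDimensional K (IZcomp n Z l) :=
  Submodule.finiteDimensional_of_le (inf_le_left : _ ≤ homogeneousSubmodule (Fin (n+1)) K l)

theorem finrank_add_hfun (n : ℕ) (Z : Finset (Fin (n+1) → K)) (l : ℕ) :
    finrank K (IZcomp n Z l) + hfun n Z l = (l + n).choose n := by
  have : finrank K (IZcomp n Z l) ≤ finrank K (homogeneousSubmodule (Fin (n+1)) K l) :=
    Submodule.finrank_mono inf_le_left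
  rw [hfun, ← finrank_homog (K := K)]
  omega

theorem pos_of_ne_bot {n : ℕ} {Z : Finset (Fin (n+1) → K)} (hZ : Z.Nonempty) {a : ℕ}
    (h : IZcomp n Z a ≠ ⊥) : 1 ≤ a := by
  by_contra ha
  obtain rfl : a = 0 := by omega
  obtain ⟨F, hF, hF0⟩ := Submodule.exists_mem_ne_zero_of_ne_bot h
  obtain ⟨v, hv⟩ := hZ
  rw [mem_IZ] at hF
  have hu := (isUnit_of_homog_zero n hF.1 hF0).map (eval v)
  rw [hF.2 v hv] at hu
  exact not_isUnit_zero hu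

theorem homog_cofactor {n d k : ℕ} {l Q : MvPolynomial (Fin (n+1)) K} (hl : l.IsHomogeneous d)
    (hl0 : l ≠ 0) (h : (l * Q).IsHomogeneous (d + k)) : Q.IsHomogeneous k := by
  by_cases hQ : Q = 0
  · rw [hQ]; exact isHomogeneous_zero _ _ _
  obtain ⟨d', e, hde, hd, he⟩ := homog_factor n (d + k) h (mul_ne_zero hl0 hQ) rfl
  have := hd.inj_right hl hl0
  rwa [show k = e by omega]

theorem prime_linear {n : ℕ} {l : MvPolynomial (Fin (n+1)) K} (hl : l.IsHomogeneous 1)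
    (hl0 : l ≠ 0) : Prime l := by
  refine Irreducible.prime (irreducible_iff.mpr ⟨fun hu => ?_, fun G H hGH => ?_⟩)
  · obtain ⟨q, hq⟩ := hu.exists_right_inv
    obtain ⟨d, e, hde, hd, he⟩ := homog_factor n 0 (isHomogeneous_one _ _) one_ne_zero hq.symm
    have := hd.inj_right hl hl0
    omega
  · obtain ⟨d, e, hde, hd, he⟩ := homog_factor n 1 hl hl0 hGH
    have hG0 : G ≠ 0 := by rintro rfl; simp_all
    have hH0 : H ≠ 0 := by rintro rfl; simp_all
    rcases Nat.eq_zero_or_pos d with rfl | h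
    · exact Or.inl (isUnit_of_homog_zero n hd hG0)
    · obtain rfl : e = 0 := by omega
      exact Or.inr (isUnit_of_homog_zero n he hH0)

/-- A form of initial degree in the ideal is not divisible by a linear form missing `Z`, since the
quotient would vanish on `Z` too, in smaller degree. -/
theorem not_dvd_initial {n : ℕ} {Z : Finset (Fin (n+1) → K)} {a : ℕ} (ha1 : 1 ≤ a)
    (ha : ∀ l < a, IZcomp n Z l = ⊥) {l F : MvPolynomial (Fin (n+1)) K}
    (hl : l.IsHomogeneous 1) (hl0 : l ≠ 0) (hlZ : ∀ v ∈ Z, eval v l ≠ 0)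
    (hF : F ∈ IZcomp n Z a) (hd : l ∣ F) : F = 0 := by
  obtain ⟨Q, rfl⟩ := hd
  obtain ⟨k, rfl⟩ : ∃ k, a = 1 + k := ⟨a - 1, by omega⟩
  rw [mem_IZ] at hF
  have hQ : Q ∈ IZcomp n Z k := by
    rw [mem_IZ]
    refine ⟨homog_cofactor hl hl0 hF.1, fun v hv => ?_⟩
    have := hF.2 v hv
    rw [map_mul] at this
    exact (mul_eq_zero.mp this).resolve_left (hlZ v hv)
  rw [ha k (by omega), Submodule.mem_bot] at hQ
  rw [hQ, mul_zero]

theorem finrank_map_mul {n : ℕ} {P : MvPolynomial (Fin (n+1)) K} (hP : P ≠ 0)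
    (V : Submodule K (MvPolynomial (Fin (n+1)) K)) :
    finrank K (V.map (LinearMap.mulLeft K P)) = finrank K V :=
  (Submodule.equivMapOfInjective _ (mul_right_injective₀ hP) V).finrank_eq.symm

theorem mul_mem_IZ {n : ℕ} {Z : Finset (Fin (n+1) → K)} {d e : ℕ}
    {G H : MvPolynomial (Fin (n+1)) K} (hG : G ∈ IZcomp n Z d) (hH : H.IsHomogeneous e) :
    G * H ∈ IZcomp n Z (d + e) := by
  rw [mem_IZ] at *
  exact ⟨hG.1.mul hH, fun v hv => by rw [map_mul, hG.2 v hv, zero_mul]⟩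

section growth

variable {n : ℕ} {Z : Finset (Fin (n+1) → K)} {a : ℕ} {l F : MvPolynomial (Fin (n+1)) K}

theorem sup_le_IZ (hl : l.IsHomogeneous 1) (hF : F ∈ IZcomp n Z a) (k : ℕ) :
    (IZcomp n Z (a + k)).map (LinearMap.mulLeft K l) ⊔
      (homogeneousSubmodule (Fin (n+1)) K (k+1)).map (LinearMap.mulLeft K F) ≤
      IZcomp n Z (a + (k + 1)) := by
  refine sup_le ?_ ?_
  · rintro _ ⟨P, hP, rfl⟩
    rw [LinearMap.mulLeft_apply, mul_comm]
    exact mul_mem_IZ (d := a + k) hP hl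
  · rintro _ ⟨P, hP, rfl⟩
    exact mul_mem_IZ hF hP

/-- The subspaces `l [I_Z]_{a+k}` and `F S_{k+1}` of `[I_Z]_{a+k+1}` meet inside `l F S_k`,
because the linear form `l` is prime and does not divide `F`. -/
theorem finrank_sup_ge (ha1 : 1 ≤ a) (ha : ∀ l < a, IZcomp n Z l = ⊥)
    (hl : l.IsHomogeneous 1) (hl0 : l ≠ 0) (hlZ : ∀ v ∈ Z, eval v l ≠ 0)
    (hF : F ∈ IZcomp n Z a) (hF0 : F ≠ 0) (k : ℕ) :
    finrank K (IZcomp n Z (a + k)) + (k + 1 + n).choose n ≤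
      finrank K ↥((IZcomp n Z (a + k)).map (LinearMap.mulLeft K l) ⊔
      (homogeneousSubmodule (Fin (n+1)) K (k+1)).map (LinearMap.mulLeft K F)) +
      (k + n).choose n := by
  have h := Submodule.finrank_sup_add_finrank_inf_eq
    ((IZcomp n Z (a + k)).map (LinearMap.mulLeft K l))
    ((homogeneousSubmodule (Fin (n+1)) K (k+1)).map (LinearMap.mulLeft K F))
  rw [finrank_map_mul hl0, finrank_map_mul hF0, finrank_homog] at h
  rw [← h, ← finrank_homog (K := K) n k, 
    ← finrank_map_mul (mul_ne_zero hF0 hl0) (homogeneousSubmodule (Fin (n+1)) K k)]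
  refine Nat.add_le_add_left (Submodule.finrank_mono ?_) _
  rintro _ ⟨⟨P, hP, rfl⟩, Q, hQ, hQP⟩
  rw [LinearMap.mulLeft_apply, LinearMap.mulLeft_apply] at *
  have hdvd : l ∣ Q := ((prime_linear hl hl0).dvd_mul.mp ⟨P, hQP⟩).resolve_left
    fun h => hF0 (not_dvd_initial ha1 ha hl hl0 hlZ hF h)
  obtain ⟨R, rfl⟩ := hdvd
  refine ⟨R, homog_cofactor hl hl0 (Nat.add_comm k 1 ▸ hQ), ?_⟩
  rw [LinearMap.mulLeft_apply, ← hQP, mul_assoc]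

/-- The excess `dim [I_Z]_{a+k} - dim S_k` is nondecreasing in `k`. -/
theorem growth (ha1 : 1 ≤ a) (ha : ∀ l < a, IZcomp n Z l = ⊥)
    (hl : l.IsHomogeneous 1) (hl0 : l ≠ 0) (hlZ : ∀ v ∈ Z, eval v l ≠ 0)
    (hF : F ∈ IZcomp n Z a) (hF0 : F ≠ 0) {k k' : ℕ} (hk : k ≤ k') :
    finrank K (IZcomp n Z (a + k)) + (k' + n).choose n ≤
      finrank K (IZcomp n Z (a + k')) + (k + n).choose n := by
  induction k', hk using Nat.le_induction with
  | base => exact le_rfl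
  | succ m hm ih =>
    have h1 := finrank_sup_ge ha1 ha hl hl0 hlZ hF hF0 m
    have h2 := Submodule.finrank_mono (sup_le_IZ hl hF m)
    omega

end growth

/-- Over an infinite field some hyperplane, with nonzero `x₀`-coefficient, misses `Z`. -/
theorem exists_linear (n : ℕ) [Infinite K] (Z : Finset (Fin (n+1) → K)) (hZ0 : ∀ v ∈ Z, v ≠ 0) :
    ∃ c : Fin (n+1) → K, c 0 ≠ 0 ∧ ∀ v ∈ Z, ∑ i, c i * v i ≠ 0 := by
  obtain ⟨c, hc⟩ := exists_avoid (K := K) (N := n+1) (fun o : Option Z => o.elim (X 0)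
    fun v => ∑ i, C (v.1 i) * X i) (by
      rintro (_ | v)
      · exact X_ne_zero _
      · intro h
        apply hZ0 v v.2
        funext i
        classical
        have := congrArg (eval (Pi.single i 1)) h
        simpa [Pi.single_apply] using this)
  refine ⟨c, by simpa using hc none, fun v hv => ?_⟩
  have := hc (some ⟨v, hv⟩)
  simpa [mul_comm] using this

/-- If `dim [I_Z]_a ≥ 2`, the excess grows strictly from degree `a` to degree `a + 1`. Otherwise
`[I_Z]_{a+1} = l [I_Z]_a + F S_1`, and for `G ∈ [I_Z]_a` one has `G x_i ≡ F B_i` modulo `l` for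
`i = 1, 2`. Hence `B₁ x₂ ≡ B₂ x₁`, so that `B₁ = β l + γ x₁`; then `l` divides `G - γ F`, which is
therefore `0`, making `[I_Z]_a` one-dimensional. -/
theorem strict_growth {n : ℕ} (hn : 2 ≤ n) {Z : Finset (Fin (n+1) → K)} {a : ℕ}
    {F : MvPolynomial (Fin (n+1)) K} (c : Fin (n+1) → K) (hc0 : c 0 ≠ 0)
    (ha1 : 1 ≤ a) (ha : ∀ l < a, IZcomp n Z l = ⊥)
    (hlZ : ∀ v ∈ Z, ∑ i, c i * v i ≠ 0)
    (hF : F ∈ IZcomp n Z a) (hF0 : F ≠ 0) (hu : 2 ≤ finrank K (IZcomp n Z a)) :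
    finrank K (IZcomp n Z a) + (1 + n).choose n ≤ finrank K (IZcomp n Z (a + 1)) := by
  obtain ⟨m, rfl⟩ : ∃ m, n = m + 2 := ⟨n - 2, by omega⟩
  let r : MvPolynomial (Fin (m+2+1)) K := ∑ i : Fin (m+1), C (c i.succ.succ) * X i.succ.succ
  obtain ⟨l, hldef⟩ : ∃ l : MvPolynomial (Fin (m+2+1)) K, l = ∑ i, C (c i) * X i := ⟨_, rfl⟩
  have hlr : l = C (c 0) * X 0 + (C (c 1) * X 1 + r) := by
    rw [hldef, Fin.sum_univ_succ, Fin.sum_univ_succ]; rfl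
  have hl : l.IsHomogeneous 1 := by
    rw [hldef]
    exact IsHomogeneous.sum _ _ _ fun i _ => isHomogeneous_C_mul_X _ _
  have hlev : ∀ v, eval v l = ∑ i, c i * v i := fun v => by simp [hldef]
  have hl0 : l ≠ 0 := by
    rintro h0
    apply hc0
    have := hlev (Pi.single 0 1)
    rw [h0, map_zero] at this
    simpa [Pi.single_apply] using this.symm
  have hlZ' : ∀ v ∈ Z, eval v l ≠ 0 := fun v hv => by rw [hlev]; exact hlZ v hv
  have hprime := prime_linear hl hl0
  have hlF : ¬ l ∣ F := fun h => hF0 (not_dvd_initial ha1 ha hl hl0 hlZ' hF h)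
  have h1 := finrank_sup_ge ha1 ha hl hl0 hlZ' hF hF0 0
  have h2 := sup_le_IZ hl hF 0
  suffices hlt : (IZcomp (m+2) Z (a + 0)).map (LinearMap.mulLeft K l) ⊔
      (homogeneousSubmodule (Fin (m+2+1)) K (0+1)).map (LinearMap.mulLeft K F) <
      IZcomp (m+2) Z (a + (0 + 1)) by
    have h3 := Submodule.finrank_lt_finrank_of_lt hlt
    simp only [zero_add, Nat.choose_self] at h1
    change finrank K (IZcomp (m+2) Z a) + _ ≤ _ at h1
    change _ < finrank K (IZcomp (m+2) Z (a+1)) at h3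
    omega
  refine lt_of_le_of_ne h2 fun heq => ?_
  -- a form of degree `a` in the ideal that is not a multiple of `F`
  obtain ⟨G, hG, hGF⟩ : ∃ G ∈ IZcomp (m+2) Z a, G ∉ Submodule.span K {F} := by
    by_contra hcon
    push Not at hcon
    have h3 := Submodule.finrank_mono (show IZcomp (m+2) Z a ≤ Submodule.span K {F} from hcon)
    rw [finrank_span_singleton hF0] at h3
    omega
  have hdec : ∀ i, ∃ A B : MvPolynomial (Fin (m+2+1)) K,
      B.IsHomogeneous 1 ∧ G * X i = l * A + F * B := by
    intro i
    have hmem : G * X i ∈ IZcomp (m+2) Z (a + (0 + 1)) := mul_mem_IZ hG (isHomogeneous_X _ _)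
    rw [← heq, Submodule.mem_sup] at hmem
    obtain ⟨_, ⟨A, _, rfl⟩, _, ⟨B, hB, rfl⟩, hAB⟩ := hmem
    exact ⟨A, B, hB, hAB.symm⟩
  obtain ⟨A₁, B₁, hB₁, e₁⟩ := hdec 1
  obtain ⟨A₂, B₂, hB₂, e₂⟩ := hdec (Fin.succ (Fin.succ 0))
  have hdvd : l ∣ B₁ * X (Fin.succ (Fin.succ 0)) - B₂ * X 1 := by
    refine (hprime.dvd_mul.mp (?_ : l ∣ F * _)).resolve_left hlF
    refine ⟨A₂ * X 1 - A₁ * X (Fin.succ (Fin.succ 0)), ?_⟩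
    linear_combination X (Fin.succ (Fin.succ 0)) * (-e₁) + X 1 * e₂
  -- restriction to the codimension-two linear space `l = x₁ = 0`
  let φ : MvPolynomial (Fin (m+2+1)) K →ₐ[K] MvPolynomial (Fin (m+2+1)) K :=
    aeval (Fin.cons (C (-(c 0)⁻¹) * r) (Fin.cons 0 fun i : Fin (m+1) => X i.succ.succ))
  have hφ0 : φ (X 0) = C (-(c 0)⁻¹) * r := by simp [φ]
  have hφ1 : φ (X 1) = 0 := by
    rw [show (1 : Fin (m+2+1)) = Fin.succ 0 from rfl]
    simp only [φ, aeval_X, Fin.cons_succ, Fin.cons_zero]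
  have hφs : ∀ i : Fin (m+1), φ (X i.succ.succ) = X i.succ.succ := fun i => by
    simp only [φ, aeval_X, Fin.cons_succ]
  have hφr : φ r = r := by
    simp only [r, map_sum, map_mul, hφs]
    simp [φ]
  have hφC : ∀ x, φ (C x) = C x := fun x => by simp [φ]
  have hcc : C (c 0) * C ((c 0)⁻¹) = (1 : MvPolynomial (Fin (m+2+1)) K) := by
    rw [← C_mul, mul_inv_cancel₀ hc0, C_1]
  have hφl : φ l = 0 := by
    rw [hlr, map_add, map_add, map_mul, map_mul, hφ0, hφ1, hφr, hφC, hφC, C_neg]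
    linear_combination (-r) * hcc
  have hφB : φ B₁ = 0 := by
    obtain ⟨q, hq⟩ := hdvd
    have := congrArg φ hq
    rw [map_sub, map_mul, map_mul, map_mul, hφs, hφ1, hφl, mul_zero, zero_mul, sub_zero] at this
    exact (mul_eq_zero.mp this).resolve_right (X_ne_zero _)
  have hker : ∀ B : MvPolynomial (Fin (m+2+1)) K, B.IsHomogeneous 1 →
      B - φ B ∈ Submodule.span K {l, X 1} := by
    intro B hB
    rw [← mem_homogeneousSubmodule, homogeneousSubmodule_one_eq_span_X] at hB
    have hle : Submodule.span K (Set.range X) ≤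
        (Submodule.span K {l, X 1}).comap (LinearMap.id - φ.toLinearMap) := by
      rw [Submodule.span_le]
      rintro _ ⟨i, rfl⟩
      simp only [Submodule.comap_coe, Set.mem_preimage, LinearMap.sub_apply, LinearMap.id_apply,
        AlgHom.toLinearMap_apply, SetLike.mem_coe]
      refine Fin.cases ?_ (fun i => Fin.cases ?_ (fun i => ?_) i) i
      · rw [hφ0, Submodule.mem_span_pair]
        refine ⟨(c 0)⁻¹, -((c 0)⁻¹ * c 1), ?_⟩
        rw [smul_eq_C_mul, smul_eq_C_mul, hlr]
        simp only [C_neg, C_mul]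
        linear_combination (X 0) * hcc
      · rw [show Fin.succ (0 : Fin (m+2)) = 1 from rfl, hφ1, sub_zero]
        exact Submodule.subset_span (by simp)
      · rw [hφs, sub_self]
        exact Submodule.zero_mem _
    exact hle hB
  have hB := hker B₁ hB₁
  rw [hφB, sub_zero, Submodule.mem_span_pair] at hB
  obtain ⟨β, γ, hβ⟩ := hB
  rw [smul_eq_C_mul, smul_eq_C_mul] at hβ
  have hlX : ¬ l ∣ X 1 := by
    rintro ⟨q, hq⟩
    -- a point of the hyperplane `l = 0` off `x₁ = 0`
    have := congrArg (eval (Fin.cons (-(c 0)⁻¹ * c 1) (Fin.cons 1 fun _ : Fin (m+1) => 0))) hq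
    rw [show (1 : Fin (m+2+1)) = Fin.succ 0 from rfl, map_mul, hlev, Fin.sum_univ_succ,
      Fin.sum_univ_succ] at this
    simp [hc0] at this
  have hdvd2 : l ∣ G - C γ * F := by
    refine (hprime.dvd_mul.mp (?_ : l ∣ X 1 * _)).resolve_left hlX
    refine ⟨A₁ + C β * F, ?_⟩
    linear_combination e₁ - F * hβ
  have hmem : G - C γ * F ∈ IZcomp (m+2) Z a := by
    rw [← smul_eq_C_mul]
    exact Submodule.sub_mem _ hG (Submodule.smul_mem _ _ hF)
  have hz := not_dvd_initial ha1 ha hl hl0 hlZ' hmem hdvd2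
  apply hGF
  rw [Submodule.mem_span_singleton]
  exact ⟨γ, by rw [smul_eq_C_mul]; exact (sub_eq_zero.mp hz).symm⟩

/-! ### Irreducible forms -/

/-- Writing `s_d = dim S_d` for `n + 1 ≥ 3` variables, `s_d + s_e ≤ s_{d+e}` for `d, e ≥ 1`. -/
theorem choose_superadd {n : ℕ} (hn : 2 ≤ n) {d e : ℕ} (hd : 1 ≤ d) (he : 1 ≤ e) :
    (d + n).choose n + (e + n).choose n ≤ (d + e + n).choose n := by
  obtain ⟨m, rfl⟩ : ∃ m, n = m + 2 := ⟨n - 2, by omega⟩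
  have pascal : ∀ x, (x + 1 + (m + 2)).choose (m + 2) =
      (x + m + 2).choose (m + 1) + (x + (m + 2)).choose (m + 2) := fun x => by
    rw [show x + 1 + (m + 2) = (x + m + 2) + 1 by omega, Nat.choose_succ_succ]
    rfl
  induction e, he using Nat.le_induction with
  | base =>
    rw [pascal d, pascal 0]
    have h1 : (1 + m + 2).choose (m + 1) ≤ (d + m + 2).choose (m + 1) :=
      Nat.choose_le_choose _ (by omega)
    have h2 : (1 + m + 2).choose (m + 1) = (m + 2).choose m + (m + 2).choose (m + 1) := by
      rw [show 1 + m + 2 = (m + 2) + 1 by omega, Nat.choose_succ_succ]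
    have h3 : 1 ≤ (m + 2).choose m := Nat.choose_pos (by omega)
    have h4 : (0 + (m + 2)).choose (m + 2) = 1 := by simp
    have h5 : (0 + m + 2).choose (m + 1) = (m + 2).choose (m + 1) := by simp
    omega
  | succ e he ih =>
    rw [show d + (e + 1) = d + e + 1 from rfl, pascal (d + e), pascal e]
    have : (e + m + 2).choose (m + 1) ≤ (d + e + m + 2).choose (m + 1) :=
      Nat.choose_le_choose _ (by omega)
    omega

/-- A reducible form in `[I_Z]_t` is a product of forms of degrees `d, e ≥ 1` vanishing on subsets
`Y₁`, `Y₂` that cover `Z`. There are finitely many choices of `(d, Y₁, Y₂)`, so a dimension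
bound for each of them yields an irreducible form. -/
theorem exists_irreducible {n : ℕ} [Infinite K] {Z : Finset (Fin (n+1) → K)} (hZne : Z.Nonempty)
    {t : ℕ} (ht : IZcomp n Z t ≠ ⊥)
    (hdim : ∀ d e : ℕ, d + e = t → 1 ≤ d → 1 ≤ e → ∀ Y₁ ⊆ Z, ∀ Y₂ ⊆ Z,
      Z.card ≤ Y₁.card + Y₂.card → IZcomp n Y₁ d ≠ ⊥ → IZcomp n Y₂ e ≠ ⊥ →
      finrank K (IZcomp n Y₁ d) + finrank K (IZcomp n Y₂ e) ≤ finrank K (IZcomp n Z t)) :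
    ∃ F ∈ IZcomp n Z t, Irreducible F := by
  classical
  let ι : Type := {x : Fin (t+1) × Z.powerset × Z.powerset // 1 ≤ x.1.1 ∧ 1 ≤ t - x.1.1 ∧
    Z.card ≤ x.2.1.1.card + x.2.2.1.card ∧ IZcomp n x.2.1.1 x.1.1 ≠ ⊥ ∧
    IZcomp n x.2.2.1 (t - x.1.1) ≠ ⊥}
  obtain ⟨F, hF, hF0, hprod⟩ := exists_not_product (ι := ι) (IZcomp n Z t) ht
    (fun x => IZcomp n x.1.2.1.1 x.1.1.1) (fun x => IZcomp n x.1.2.2.1 (t - x.1.1.1)) (by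
      rintro ⟨⟨d, Y₁, Y₂⟩, h1, h2, h3, h4, h5⟩
      exact hdim _ _ (by have := d.2; omega) h1 h2 _ (Finset.mem_powerset.mp Y₁.2) _
        (Finset.mem_powerset.mp Y₂.2) h3 h4 h5)
  refine ⟨F, hF, irreducible_iff.mpr ⟨fun hu => ?_, fun G H hGH => ?_⟩⟩
  · obtain ⟨v, hv⟩ := hZne
    have := hu.map (eval v)
    rw [(mem_IZ.mp hF).2 v hv] at this
    exact not_isUnit_zero this
  · by_contra hcon
    push Not at hcon
    obtain ⟨hG, hH⟩ := hcon
    obtain ⟨d, e, hde, hd, he⟩ := homog_factor n t (mem_IZ.mp hF).1 hF0 hGH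
    have hG0 : G ≠ 0 := by rintro rfl; simp_all
    have hH0 : H ≠ 0 := by rintro rfl; simp_all
    have hd1 : 1 ≤ d := Nat.pos_of_ne_zero fun h => hG (isUnit_of_homog_zero n (h ▸ hd) hG0)
    have he1 : 1 ≤ e := Nat.pos_of_ne_zero fun h => hH (isUnit_of_homog_zero n (h ▸ he) hH0)
    obtain rfl : e = t - d := by omega
    have hGm : G ∈ IZcomp n (Z.filter fun v => eval v G = 0) d :=
      mem_IZ.mpr ⟨hd, fun v hv => (Finset.mem_filter.mp hv).2⟩
    have hHm : H ∈ IZcomp n (Z.filter fun v => eval v H = 0) (t - d) :=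
      mem_IZ.mpr ⟨he, fun v hv => (Finset.mem_filter.mp hv).2⟩
    refine hprod ⟨⟨⟨d, by omega⟩, ⟨Z.filter fun v => eval v G = 0, by simp⟩,
      ⟨Z.filter fun v => eval v H = 0, by simp⟩⟩, hd1, he1, ?_, ?_, ?_⟩ G hGm H hHm hGH
    · rw [← Finset.card_union_add_card_inter]
      refine (Finset.card_le_card fun v hv => ?_).trans (Nat.le_add_right _ _)
      have := (mem_IZ.mp hF).2 v hv
      rw [hGH, map_mul, mul_eq_zero] at this
      simpa [hv] using this
    · exact fun h => hG0 (by rw [h] at hGm; simpa using hGm)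
    · exact fun h => hH0 (by rw [h] at hHm; simpa using hHm)

/-- Forms of degree `d` vanishing on all of `Z`, multiplied by arbitrary forms of degree `e ≥ 1`,
do not fill `[I_Z]_{d+e}` when `d + e ≥ b`. For `d > a` this follows from the growth of the excess
and `choose_superadd`; for `d = a` from the strict growth when `dim [I_Z]_a ≥ 2`, and from the
definition of `b` when `dim [I_Z]_a = 1`. -/
theorem dim_bound {n : ℕ} (hn : 2 ≤ n) [Infinite K] {Z : Finset (Fin (n+1) → K)}
    (hZne : Z.Nonempty) (hZ0 : ∀ v ∈ Z, v ≠ 0) {a b : ℕ}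
    (ha : IsLeast {ℓ : ℕ | IZcomp n Z ℓ ≠ ⊥} a)
    (hb : Nat.choose (b - a + n) n < finrank K (IZcomp n Z b)) (hab : a ≤ b)
    {d e : ℕ} (hd : a ≤ d) (he : 1 ≤ e) (ht : b ≤ d + e) :
    finrank K (IZcomp n Z d) + (e + n).choose n ≤ finrank K (IZcomp n Z (d + e)) := by
  have hbot : ∀ l < a, IZcomp n Z l = ⊥ := fun l hl => by
    by_contra h
    exact absurd (ha.2 h) (by omega)
  have ha1 := pos_of_ne_bot hZne ha.1
  obtain ⟨F, hF, hF0⟩ := Submodule.exists_mem_ne_zero_of_ne_bot ha.1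
  obtain ⟨c, hc0, hcZ⟩ := exists_linear n Z hZ0
  have hev : ∀ v, eval v (∑ i, C (c i) * X i : MvPolynomial (Fin (n+1)) K) = ∑ i, c i * v i :=
    fun v => by simp
  have hl : (∑ i, C (c i) * X i : MvPolynomial (Fin (n+1)) K).IsHomogeneous 1 :=
    IsHomogeneous.sum _ _ _ fun i _ => isHomogeneous_C_mul_X _ _
  have hlZ : ∀ v ∈ Z, eval v (∑ i, C (c i) * X i : MvPolynomial (Fin (n+1)) K) ≠ 0 :=
    fun v hv => by rw [hev]; exact hcZ v hv
  have hl0 : (∑ i, C (c i) * X i : MvPolynomial (Fin (n+1)) K) ≠ 0 := by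
    obtain ⟨v, hv⟩ := hZne
    intro h
    apply hlZ v hv
    rw [h, map_zero]
  have hgrow : ∀ {k k' : ℕ}, k ≤ k' → finrank K (IZcomp n Z (a + k)) + (k' + n).choose n ≤
      finrank K (IZcomp n Z (a + k')) + (k + n).choose n :=
    fun h => growth ha1 hbot hl hl0 hlZ hF hF0 h
  obtain ⟨p, rfl⟩ : ∃ p, d = a + p := ⟨d - a, by omega⟩
  rw [add_assoc]
  rcases Nat.eq_zero_or_pos p with rfl | hp
  · rw [zero_add]
    change finrank K (IZcomp n Z a) + _ ≤ _
    rcases Nat.lt_or_ge 1 (finrank K (IZcomp n Z a)) with h2 | h1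
    · have h3 := strict_growth hn c hc0 ha1 hbot hcZ hF hF0 h2
      have h4 := hgrow he
      omega
    · obtain ⟨k, rfl⟩ : ∃ k, b = a + k := ⟨b - a, by omega⟩
      have h4 := hgrow (show k ≤ e by omega)
      rw [Nat.add_sub_cancel_left] at hb
      omega
  · have h4 := hgrow (Nat.le_add_right p e)
    have h5 := choose_superadd hn hp he
    omega

theorem exists_irreducible_of_UPP {n : ℕ} (hn : 2 ≤ n) [Infinite K]
    {Z : Finset (Fin (n+1) → K)} (hZne : Z.Nonempty) (hZ0 : ∀ v ∈ Z, v ≠ 0) (hUPP : UPP n Z)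
    {a b : ℕ} (ha : IsLeast {ℓ : ℕ | IZcomp n Z ℓ ≠ ⊥} a)
    (hb : Nat.choose (b - a + n) n < finrank K (IZcomp n Z b)) (hab : a ≤ b)
    {t : ℕ} (ht : t = a ∨ b ≤ t) (htne : IZcomp n Z t ≠ ⊥) :
    ∃ F ∈ IZcomp n Z t, Irreducible F := by
  -- a factor with at least `h_Z(d)` zeros in `Z` lies in a space as small as `[I_Z]_d`
  have main : ∀ d e : ℕ, d + e = t → 1 ≤ e → ∀ Y₁ ⊆ Z, ∀ Y₂ : Finset (Fin (n+1) → K),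
      hfun n Z d ≤ Y₁.card → IZcomp n Y₁ d ≠ ⊥ →
      finrank K (IZcomp n Y₁ d) + finrank K (IZcomp n Y₂ e) ≤ finrank K (IZcomp n Z t) := by
    rintro d e rfl he Y₁ hY₁ Y₂ hle hne
    have h1 := finrank_add_hfun n Y₁ d
    have h2 := finrank_add_hfun n Z d
    have h3 := finrank_add_hfun n Y₂ e
    have h4 := hUPP d Y₁ hY₁
    rw [min_eq_right hle] at h4
    have h5 : finrank K (IZcomp n Y₁ d) ≠ 0 := fun h => hne (Submodule.finrank_eq_zero.mp h)
    have had : a ≤ d := by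
      apply ha.2
      intro h
      have : finrank K (IZcomp n Z d) = 0 := Submodule.finrank_eq_zero.mpr h
      omega
    have h6 := dim_bound hn hZne hZ0 ha hb hab had he (by omega)
    omega
  refine exists_irreducible hZne htne fun d e hde hd he Y₁ hY₁ Y₂ hY₂ hcard hne₁ hne₂ => ?_
  rcases le_total (hfun n Z d) Y₁.card with h | h
  · exact main d e hde he Y₁ hY₁ Y₂ h hne₁
  rcases le_total (hfun n Z e) Y₂.card with h' | h'
  · rw [add_comm]
    exact main e d (by omega) hd Y₂ hY₂ Y₁ h' hne₂
  -- now `Y₁` and `Y₂` both impose independent conditions, `|Z| ≥ h_Z(t)` in total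
  have h1 := finrank_add_hfun n Y₁ d
  have h2 := finrank_add_hfun n Y₂ e
  have h3 := finrank_add_hfun n Z t
  have h4 := hUPP d Y₁ hY₁
  have h5 := hUPP e Y₂ hY₂
  have h6 := hUPP t Z subset_rfl
  rw [min_eq_left h] at h4
  rw [min_eq_left h'] at h5
  have h7 := choose_superadd hn hd he
  rw [hde] at h7
  have h8 := min_le_left Z.card (hfun n Z t)
  omega

/-- If `dim [I_Z]_t ≤ dim S_{t-a}` then `[I_Z]_t = P S_{t-a}` for any nonzero `P ∈ [I_Z]_a`. -/
theorem not_irreducible_of_lt {n : ℕ} {Z : Finset (Fin (n+1) → K)} (hZne : Z.Nonempty)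
    {a t : ℕ} {P : MvPolynomial (Fin (n+1)) K} (hP : P ∈ IZcomp n Z a) (hP0 : P ≠ 0) (hat : a < t)
    (ht : finrank K (IZcomp n Z t) ≤ (t - a + n).choose n) {F : MvPolynomial (Fin (n+1)) K}
    (hF : F ∈ IZcomp n Z t) (hF0 : F ≠ 0) : ¬ Irreducible F := by
  obtain ⟨k, rfl⟩ : ∃ k, t = a + k := ⟨t - a, by omega⟩
  rw [Nat.add_sub_cancel_left, ← finrank_homog (K := K),
    ← finrank_map_mul hP0 (homogeneousSubmodule (Fin (n+1)) K k)] at ht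
  have heq := Submodule.eq_of_le_of_finrank_le (by
    rintro _ ⟨Q, hQ, rfl⟩
    exact mul_mem_IZ hP hQ) ht
  rw [← heq] at hF
  obtain ⟨Q, hQ, rfl⟩ := hF
  rw [LinearMap.mulLeft_apply] at *
  intro hirr
  rcases hirr.isUnit_or_isUnit rfl with hu | hu
  · obtain ⟨v, hv⟩ := hZne
    have := hu.map (eval v)
    rw [(mem_IZ.mp hP).2 v hv] at this
    exact not_isUnit_zero this
  · obtain ⟨q, hq⟩ := hu.exists_right_inv
    obtain ⟨d, e, hde, hd, he⟩ := homog_factor n 0 (isHomogeneous_one _ _) one_ne_zero hq.symm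
    have := hd.inj_right hQ (right_ne_zero_of_mul hF0)
    omega
/-- Let `Z` be a finite nonempty set of points of `ℙⁿ(K)`, `n ≥ 2`, with the UPP,
`a` the least degree with `[I_Z]_a ≠ 0`, and `b` the least degree with
`dim [I_Z]_b > (b - a + n).choose n`.  Then every nonzero form in `[I_Z]_t` with
`a < t < b` is reducible, while `[I_Z]_a` and `[I_Z]_t` for `t ≥ b` contain
irreducible forms. -/
theorem stmt_1 {K : Type} [Field K] [IsAlgClosed K] [CharZero K]
    (n : ℕ) (hn : 2 ≤ n) (Z : Finset (Fin (n+1) → K)) (hZne : Z.Nonempty)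
    (hZ0 : ∀ v ∈ Z, v ≠ 0)
    (hZdist : ∀ v ∈ Z, ∀ w ∈ Z, v ≠ w → ∀ c : K, w ≠ c • v)
    (hUPP : UPP n Z)
    (a b : ℕ)
    (ha : IsLeast {ℓ : ℕ | IZcomp n Z ℓ ≠ ⊥} a)
    (hb : IsLeast {ℓ : ℕ | Nat.choose (ℓ - a + n) n < finrank K (IZcomp n Z ℓ)} b) :
    (∀ t : ℕ, a < t → t < b → ∀ F ∈ IZcomp n Z t, F ≠ 0 → ¬ Irreducible F) ∧
    (∃ F ∈ IZcomp n Z a, Irreducible F) ∧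
    (∀ t : ℕ, b ≤ t → ∃ F ∈ IZcomp n Z t, Irreducible F) := by
  have hab : a ≤ b := by
    apply ha.2
    intro h
    have h1 := hb.1
    exact absurd (Submodule.finrank_eq_zero.mpr h) (Nat.ne_of_gt (Nat.zero_le _ |>.trans_lt h1))
  obtain ⟨P, hP, hP0⟩ := Submodule.exists_mem_ne_zero_of_ne_bot ha.1
  refine ⟨fun t hat htb F hF hF0 => ?_, ?_, fun t ht => ?_⟩
  · refine not_irreducible_of_lt hZne hP hP0 hat ?_ hF hF0
    by_contra hcon
    exact absurd (hb.2 (not_le.mp hcon)) (by omega)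
  · exact exists_irreducible_of_UPP hn hZne hZ0 hUPP ha hb.1 hab (Or.inl rfl) ha.1
  · refine exists_irreducible_of_UPP hn hZne hZ0 hUPP ha hb.1 hab (Or.inr ht) fun h => ?_
    have hmem : P * X 0 ^ (t - a) ∈ IZcomp n Z (a + (t - a)) :=
      mul_mem_IZ hP (isHomogeneous_X_pow _ _)
    rw [Nat.add_sub_cancel' (hab.trans ht), h, Submodule.mem_bot] at hmem
    exact mul_ne_zero hP0 (pow_ne_zero _ (X_ne_zero _)) hmem
end
end

section
/- For every s ≥ 1 there exist s flat fat points of multiplicity 2 in ℙ² with pairwise distinct support points, with ideals J₁,…,J_s (each Jᵢ = (ℓᵢ², ℓᵢ′) with ℓᵢ, ℓᵢ′ linearly independent linear forms), such that the ideal J = J₁ ∩ … ∩ J_s satisfies dim_K [S/J]_j = min{2s, binom(j+2,2)} for all j ≥ 0; i.e., a general union of s flat fat points of multiplicity 2 in ℙ² has generic Hilbert function. -/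
/-!
The flat fat points are placed along the curve `t ↦ (1 : t : t ^ M)`, with the tangent directions
of that curve. Restriction to the curve turns a form `F` into a univariate polynomial, and `F`
lies in the ideal of the flat fat point at parameter `t` exactly when the restriction vanishes
to order two at `t` (`mem_span_iff`). When `j < M`, restriction is injective on forms of degree
`j`, since the monomials go to distinct powers of the variable (`toCurve_injOn`).

The parameters are chosen one at a time. In characteristic zero two independent polynomials have
a nonzero Wronskian, and off its zeros they realize every 1-jet; hence vanishing to order two
at a general `t` lowers the dimension of a finite-dimensional space of polynomials by two, or
makes it zero if its dimension is less than two (`exists_good`). Each space excludes only finitely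
many `t`, so finitely many degrees `j < M` can be treated at once (`exists_jets`).

Take `M = 2 * s + 1`. The 2s conditions are then independent already in degree `2 * s`, and they
stay independent in higher degrees, because multiplication by `X 0` does not change the
restriction to the curve.
-/

open MvPolynomial Module

noncomputable section

/-! ### Dimension counts -/

/-- Rank-nullity for the restriction of a linear map to a subspace. -/
lemma finrank_map_add_ker {K V W : Type*} [Field K] [AddCommGroup V] [Module K V]
    [AddCommGroup W] [Module K W] (L : V →ₗ[K] W) (S : Submodule K V) [FiniteDimensional K S] :
    finrank K (S.map L) + finrank K ↥(S ⊓ LinearMap.ker L) = finrank K S := by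
  have h := (L.domRestrict S).finrank_range_add_finrank_ker
  rw [LinearMap.range_domRestrict] at h
  rw [← h, LinearMap.ker_domRestrict, ← Submodule.finrank_map_subtype_eq,
    Submodule.map_comap_subtype]

lemma finrank_homogeneousSubmodule_three (K : Type*) [Field K] (j : ℕ) :
    finrank K ↥(homogeneousSubmodule (Fin 3) K j) = (j + 2).choose 2 := by
  have b : Basis {d : Fin 3 →₀ ℕ | d.degree = j} K ↥(homogeneousSubmodule (Fin 3) K j) := by
    rw [homogeneousSubmodule_eq_finsupp_supported]
    exact basisRestrictSupport K _
  rw [finrank_eq_nat_card_basis b]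
  have e : {d : Fin 3 →₀ ℕ | d.degree = j} =
      ((Finset.univ : Finset (Fin 3)).finsuppAntidiag j : Set _) := by
    ext d
    simp [Finset.mem_finsuppAntidiag, Finsupp.degree_eq_sum]
  rw [e, Nat.card_coe_set_eq, Set.ncard_coe_finset, Finset.card_finsuppAntidiag_nat_eq_choose,
    Finset.card_univ, Fintype.card_fin, show 3 + j - 1 = j + 2 by omega, Nat.choose_symm_add]

/-! ### General 1-jets on spaces of univariate polynomials -/

/-- The 1-jet of a univariate polynomial at `t`: its value and its derivative there. -/
def jet {K : Type*} [Field K] (t : K) : Polynomial K →ₗ[K] K × K :=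
  (Polynomial.leval t).prod (Polynomial.leval t ∘ₗ Polynomial.derivative)

@[simp] lemma jet_apply {K : Type*} [Field K] (t : K) (p : Polynomial K) :
    jet t p = (p.eval t, p.derivative.eval t) := rfl

/-- Dividing two polynomials by their gcd scales the Wronskian by the square of the gcd, and coprime
polynomials with zero Wronskian are constant in characteristic zero. -/
lemma wronskian_ne_zero {K : Type*} [Field K] [CharZero K] {f g : Polynomial K}
    (h : LinearIndependent K ![f, g]) : Polynomial.wronskian f g ≠ 0 := by
  intro hw
  have hg : g ≠ 0 := by simpa using h.ne_zero 1
  classical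
  obtain ⟨f₁, hf₁⟩ := EuclideanDomain.gcd_dvd_left f g
  obtain ⟨g₁, hg₁⟩ := EuclideanDomain.gcd_dvd_right f g
  have hd : EuclideanDomain.gcd f g ≠ 0 := fun h0 => hg (by rw [hg₁, h0, zero_mul])
  have hco : IsCoprime f₁ g₁ := by
    have hb := EuclideanDomain.gcd_eq_gcd_ab f g
    generalize EuclideanDomain.gcdA f g = A at hb
    generalize EuclideanDomain.gcdB f g = B at hb
    refine ⟨A, B, mul_left_cancel₀ hd ?_⟩
    generalize EuclideanDomain.gcd f g = d at *
    rw [hf₁, hg₁] at hb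
    linear_combination -hb
  generalize EuclideanDomain.gcd f g = d at *
  have hw' : Polynomial.wronskian f₁ g₁ = 0 := by
    have : d ^ 2 * Polynomial.wronskian f₁ g₁ = 0 := by
      rw [← hw, hf₁, hg₁]
      simp only [Polynomial.wronskian, Polynomial.derivative_mul]
      ring
    exact (mul_eq_zero.mp this).resolve_left (pow_ne_zero 2 hd)
  obtain ⟨h1, h2⟩ := hco.wronskian_eq_zero_iff.mp hw'
  obtain ⟨a, rfl⟩ := Polynomial.natDegree_eq_zero.mp
    (Polynomial.derivative_eq_zero.mp h1)
  obtain ⟨b, rfl⟩ := Polynomial.natDegree_eq_zero.mp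
    (Polynomial.derivative_eq_zero.mp h2)
  have hp := LinearIndependent.pair_iff.mp h b (-a) (by
    rw [hf₁, hg₁]
    simp only [Polynomial.smul_eq_C_mul, Polynomial.C_neg]
    ring)
  apply hg
  rw [hg₁, hp.1, Polynomial.C_0, mul_zero]

/-- Vanishing to order two at a general point `t` cuts down a space of polynomials by two
dimensions, or to zero if its dimension is less than two (whence the truncated subtraction).
The points to avoid are the zeros of `w`. -/
lemma exists_good {K : Type*} [Field K] [CharZero K] (V : Submodule K (Polynomial K))
    [FiniteDimensional K V] :
    ∃ w : Polynomial K, w ≠ 0 ∧ ∀ t : K, w.eval t ≠ 0 →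
      finrank K ↥(V ⊓ LinearMap.ker (jet t)) ≤ finrank K V - 2 := by
  by_cases h2 : 2 ≤ finrank K V
  · obtain ⟨b, hb⟩ := exists_linearIndependent_of_le_finrank h2
    have hb' : LinearIndependent K ![(b 0 : Polynomial K), (b 1 : Polynomial K)] := by
      have e : V.subtype ∘ b = ![(b 0 : Polynomial K), (b 1 : Polynomial K)] := by
        funext i; fin_cases i <;> rfl
      rw [← e]
      exact hb.map' V.subtype (Submodule.ker_subtype V)
    refine ⟨_, wronskian_ne_zero hb', fun t ht => ?_⟩
    -- two elements of `V` with nonzero Wronskian at `t` realize every 1-jet, by Cramer's rule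
    have hsurj : V.map (jet t) = ⊤ := by
      rw [eq_top_iff]
      rintro ⟨x, y⟩ -
      set f := (b 0 : Polynomial K)
      set g := (b 1 : Polynomial K)
      have hw : f.eval t * g.derivative.eval t - f.derivative.eval t * g.eval t ≠ 0 := by
        simpa [Polynomial.wronskian] using ht
      set D := f.eval t * g.derivative.eval t - f.derivative.eval t * g.eval t
      refine ⟨((x * g.derivative.eval t - y * g.eval t) / D) • f +
        ((y * f.eval t - x * f.derivative.eval t) / D) • g,
        V.add_mem (V.smul_mem _ (b 0).2) (V.smul_mem _ (b 1).2), ?_⟩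
      ext
      · simp; field_simp; simp only [D]; ring
      · simp; field_simp; simp only [D]; ring
    have := finrank_map_add_ker (jet t) V
    rw [hsurj, finrank_top, finrank_prod, finrank_self] at this
    omega
  · by_cases hV : V = ⊥
    · refine ⟨1, one_ne_zero, fun t _ => ?_⟩
      subst hV
      simp
    · obtain ⟨f, hfV, hf⟩ := Submodule.exists_mem_ne_zero_of_ne_bot hV
      refine ⟨f, hf, fun t ht => ?_⟩
      have h1 : finrank K V = 1 := by
        have : finrank K V ≠ 0 := fun h => hV (Submodule.finrank_eq_zero.mp h)
        omega
      suffices h : V ⊓ LinearMap.ker (jet t) = ⊥ by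
        rw [h, finrank_bot]; exact Nat.zero_le _
      rw [eq_bot_iff]
      rintro g ⟨hg, hgk⟩
      obtain ⟨c, hc⟩ := exists_smul_eq_of_finrank_eq_one h1 (x := ⟨f, hfV⟩)
        (by simpa using hf) ⟨g, hg⟩
      have hc' : c • f = g := congrArg Subtype.val hc
      have h0 : g.eval t = 0 := by
        have := LinearMap.mem_ker.mp hgk
        simp at this; exact this.1
      rw [← hc'] at h0
      have : c = 0 := by simpa [ht] using h0
      simp [← hc', this]

/-- Points at which order-two vanishing imposes the maximal number of conditions on finitely many
spaces of polynomials simultaneously. -/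
lemma exists_jets {K : Type*} [Field K] [CharZero K] (V : ℕ → Submodule K (Polynomial K))
    [∀ j, FiniteDimensional K (V j)] (N s : ℕ) :
    ∃ t : Fin s → K, Function.Injective t ∧ ∀ j < N,
      finrank K ↥(V j ⊓ LinearMap.ker (LinearMap.pi fun i => jet (t i))) ≤
        finrank K (V j) - 2 * s := by
  induction s with
  | zero =>
    refine ⟨Fin.elim0, fun i => i.elim0, fun j _ => ?_⟩
    simpa using Submodule.finrank_mono inf_le_left
  | succ s ih =>
    obtain ⟨t, hinj, ht⟩ := ih
    choose w hw0 hw using fun j =>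
      exists_good (V j ⊓ LinearMap.ker (LinearMap.pi fun i => jet (t i)))
    -- a point outside the earlier ones and off the zero sets of all the `w j`, `j < N`
    obtain ⟨u, hu⟩ : ∃ u, ((∏ j ∈ Finset.range N, w j) *
        ∏ i, (Polynomial.X - Polynomial.C (t i))).eval u ≠ 0 := by
      by_contra! h
      have h0 := Polynomial.funext (q := 0) fun u => (h u).trans Polynomial.eval_zero.symm
      exact mul_ne_zero (Finset.prod_ne_zero_iff.mpr fun j _ => hw0 j)
        (Finset.prod_ne_zero_iff.mpr fun i _ => Polynomial.X_sub_C_ne_zero _) h0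
    rw [Polynomial.eval_mul, Polynomial.eval_prod, Polynomial.eval_prod] at hu
    have hu1 := Finset.prod_ne_zero_iff.mp (left_ne_zero_of_mul hu)
    have hu2 := Finset.prod_ne_zero_iff.mp (right_ne_zero_of_mul hu)
    refine ⟨Fin.snoc t u, ?_, fun j hj => ?_⟩
    · rw [Fin.snoc_injective_iff]
      refine ⟨hinj, ?_⟩
      rintro ⟨i, rfl⟩
      simpa using hu2 i (Finset.mem_univ _)
    · have h1 := hw j u (hu1 j (Finset.mem_range.mpr hj))
      have h2 := ht j hj
      have e : V j ⊓ LinearMap.ker (LinearMap.pi fun i => jet ((Fin.snoc t u : Fin (s+1) → K) i)) =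
          V j ⊓ LinearMap.ker (LinearMap.pi fun i => jet (t i)) ⊓ LinearMap.ker (jet u) := by
        ext p
        simp only [LinearMap.ker_pi, Submodule.mem_inf, Submodule.mem_iInf, Fin.forall_fin_succ',
          Fin.snoc_castSucc, Fin.snoc_last, and_assoc]
      rw [e]
      omega

/-! ### Restriction to the monomial curve -/

/-- The restriction of a form to the affine curve `t ↦ (1 : t : t ^ M)`. -/
def toCurve (K : Type*) [Field K] (M : ℕ) : MvPolynomial (Fin 3) K →ₐ[K] Polynomial K :=
  aeval ![1, Polynomial.X, Polynomial.X ^ M]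

/-- The monomials of degree `j < M` restrict to distinct powers of the variable. -/
lemma toCurve_injOn {K : Type*} [Field K] {M j : ℕ} (hj : j < M) {F : MvPolynomial (Fin 3) K}
    (hF : F.IsHomogeneous j) (h : toCurve K M F = 0) : F = 0 := by
  ext d
  rw [coeff_zero]
  by_contra hd
  have hdeg : ∀ e, coeff e F ≠ 0 → e 0 + e 1 + e 2 = j := fun e he => by
    have := not_imp_comm.mp hF.coeff_eq_zero he
    rwa [Finsupp.degree_eq_sum, Fin.sum_univ_three] at this
  have h1 : (toCurve K M F).coeff (d 1 + M * d 2) = coeff d F := by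
    rw [toCurve, aeval_def, eval₂_eq', Polynomial.finsetSum_coeff, Finset.sum_eq_single d]
    · simp [Fin.prod_univ_three, ← pow_mul, ← pow_add]
    · intro e he hne
      simp only [Fin.prod_univ_three, Polynomial.algebraMap_eq]
      simp only [Matrix.cons_val, one_pow, one_mul, ← pow_mul, ← pow_add, Polynomial.coeff_C_mul,
        Polynomial.coeff_X_pow]
      rw [if_neg, mul_zero]
      intro heq
      have a := hdeg d hd
      have b := hdeg e (mem_support_iff.mp he)
      have h12 : d 1 = e 1 := by
        have := congrArg (· % M) heq
        simpa [Nat.add_mul_mod_self_left, Nat.mod_eq_of_lt (show d 1 < M by omega),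
          Nat.mod_eq_of_lt (show e 1 < M by omega)] using this
      have h22 : d 2 = e 2 := by
        rw [h12] at heq
        exact Nat.eq_of_mul_eq_mul_left (show 0 < M by omega) (by omega)
      apply hne
      ext i
      fin_cases i
      · show e 0 = d 0
        omega
      · exact h12.symm
      · exact h22.symm
    · intro hn
      simp [notMem_support_iff.mp hn]
  rw [h, Polynomial.coeff_zero] at h1
  exact hd h1.symm

/-! ### Flat fat points tangent to the curve -/

/-- The line joining the curve point `(1 : t : t ^ M)` to `(0 : 0 : 1)`. It restricts to the
uniformizer `X - t` on the curve. -/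
def chordForm (K : Type*) [Field K] (t : K) : MvPolynomial (Fin 3) K := X 1 - C t * X 0

/-- The tangent line to the curve at `(1 : t : t ^ M)`. -/
def tangentForm (K : Type*) [Field K] (M : ℕ) (t : K) : MvPolynomial (Fin 3) K :=
  X 2 - C (t ^ M) * X 0 - C (M * t ^ (M - 1)) * (X 1 - C t * X 0)

/-- Modulo the ideal of the flat fat point at `t`, every form of degree `j` is a combination of
`X 0 ^ j` and `X 0 ^ (j - 1) * chordForm K t`. In degree zero the second term is absent; the
clause `j = 0 → b = 0` compensates for the truncated exponent. -/
lemma normalForm {K : Type*} [Field K] (M : ℕ) (t : K) (j : ℕ) (F : MvPolynomial (Fin 3) K)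
    (hF : F.IsHomogeneous j) : ∃ a b : K, (j = 0 → b = 0) ∧
      F - (C a * X 0 ^ j + C b * X 0 ^ (j - 1) * chordForm K t) ∈
        Ideal.span {chordForm K t ^ 2, tangentForm K M t} := by
  set I := Ideal.span {chordForm K t ^ 2, tangentForm K M t} with hI
  have h1 : chordForm K t ^ 2 ∈ I := Ideal.subset_span (by simp)
  have h2 : tangentForm K M t ∈ I := Ideal.subset_span (by simp)
  have hlin : ∀ m ∈ homogeneousSubmodule (Fin 3) K 1,
      ∃ a b : K, m - (C a * X 0 + C b * chordForm K t) ∈ I := by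
    intro m hm
    rw [homogeneousSubmodule_one_eq_span_X] at hm
    induction hm using Submodule.span_induction with
    | mem x hx =>
      obtain ⟨i, rfl⟩ := hx
      fin_cases i
      · exact ⟨1, 0, by simp⟩
      · exact ⟨t, 1, by simp [chordForm]⟩
      · refine ⟨t ^ M, M * t ^ (M - 1), ?_⟩
        convert h2 using 1
        simp only [tangentForm, chordForm]; simp; ring
    | zero => exact ⟨0, 0, by simp⟩
    | add x y _ _ hx hy =>
      obtain ⟨a, b, h⟩ := hx
      obtain ⟨a', b', h'⟩ := hy
      refine ⟨a + a', b + b', ?_⟩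
      convert I.add_mem h h' using 1
      simp only [C_add]; ring
    | smul c x _ hx =>
      obtain ⟨a, b, h⟩ := hx
      refine ⟨c * a, c * b, ?_⟩
      convert I.mul_mem_left (C c) h using 1
      simp only [C_mul, smul_eq_C_mul]; ring
  -- forms of degree `j` are sums of products of `j` linear forms
  have hF' : F ∈ homogeneousSubmodule (Fin 3) K 1 ^ j := by
    rwa [homogeneousSubmodule_one_pow]
  induction hF' using Submodule.pow_induction_on_left' with
  | algebraMap r => exact ⟨r, 0, by simp, by simp [algebraMap_eq]⟩
  | add x y i hx hy ihx ihy =>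
    obtain ⟨a, b, h0, h⟩ := ihx (by simpa using hx)
    obtain ⟨a', b', h0', h'⟩ := ihy (by simpa using hy)
    refine ⟨a + a', b + b', fun hi => by simp [h0 hi, h0' hi], ?_⟩
    convert I.add_mem h h' using 1
    simp only [C_add]; ring
  | mem_mul m hm i x hx ih =>
    obtain ⟨a, b, h0, h⟩ := ih (by simpa using hx)
    obtain ⟨α, β, hm'⟩ := hlin m hm
    refine ⟨α * a, α * b + β * a, by simp, ?_⟩
    have key : (C b * X 0 ^ (i - 1) * X 0 : MvPolynomial (Fin 3) K) = C b * X 0 ^ i := by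
      rcases Nat.eq_zero_or_pos i with rfl | hi
      · simp [h0 rfl]
      · rw [mul_assoc, ← pow_succ, Nat.sub_add_cancel hi]
    have := I.add_mem (I.add_mem (I.mul_mem_left x hm')
      (I.mul_mem_left (C α * X 0 + C β * chordForm K t) h))
      (I.mul_mem_left (C β * C b * X 0 ^ (i - 1)) h1)
    convert this using 1
    simp only [C_add, C_mul, Nat.succ_eq_add_one, Nat.add_sub_cancel]
    linear_combination (C α * chordForm K t) * key

/-- A form lies in the ideal of the flat fat point at `t` exactly when its restriction to the curve
vanishes to order two at `t`. -/
lemma mem_span_iff {K : Type*} [Field K] {M : ℕ} (t : K) {j : ℕ}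
    {F : MvPolynomial (Fin 3) K} (hF : F.IsHomogeneous j) :
    F ∈ Ideal.span {chordForm K t ^ 2, tangentForm K M t} ↔ jet t (toCurve K M F) = 0 := by
  have hI : ∀ G ∈ Ideal.span {chordForm K t ^ 2, tangentForm K M t},
      jet t (toCurve K M G) = 0 := by
    intro G hG
    obtain ⟨p, q, rfl⟩ := Ideal.mem_span_pair.mp hG
    simp [toCurve, chordForm, tangentForm, Polynomial.derivative_pow]
  refine ⟨hI F, fun h => ?_⟩
  obtain ⟨a, b, h0, hab⟩ := normalForm M t j F hF
  have h1 := hI _ hab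
  rw [map_sub, map_sub, h] at h1
  simp [toCurve, chordForm] at h1
  rw [h1.1, h1.2] at hab
  simpa using hab

/-! ### The generic Hilbert function -/

/-- A general union of `s ≥ 1` flat fat points of multiplicity `2` in `ℙ²` has
generic Hilbert function (existential formulation, via semicontinuity):
there exist `s` flat fat points of multiplicity `2` with pairwise distinct support
points, with ideals `Jᵢ = (ℓᵢ², ℓᵢ′)`, such that `J = J₁ ∩ ⋯ ∩ J_s` satisfies
`dim_K [S/J]_j = min {2s, (j+2).choose 2}` for all `j ≥ 0`. -/
theorem stmt_3 {K : Type} [Field K] [IsAlgClosed K] [CharZero K]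
    (s : ℕ) (hs : 1 ≤ s) :
    ∃ (l l' : Fin s → MvPolynomial (Fin 3) K) (v : Fin s → Fin 3 → K),
      (∀ i, l i ∈ homogeneousSubmodule (Fin 3) K 1) ∧
      (∀ i, l' i ∈ homogeneousSubmodule (Fin 3) K 1) ∧
      (∀ i, LinearIndependent K ![l i, l' i]) ∧
      -- the support point of the `i`-th flat fat point
      (∀ i, v i ≠ 0) ∧
      (∀ i, aeval (v i) (l i) = 0 ∧ aeval (v i) (l' i) = 0) ∧
      -- pairwise distinct support points
      (∀ i j, i ≠ j → ∀ c : K, v j ≠ c • v i) ∧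
      -- generic Hilbert function of the union
      (∀ j : ℕ,
        finrank K ↥(homogeneousSubmodule (Fin 3) K j) -
          finrank K ↥(homogeneousSubmodule (Fin 3) K j ⊓
            Submodule.restrictScalars K
              ((⨅ i, Ideal.span {(l i) ^ 2, l' i} : Ideal (MvPolynomial (Fin 3) K)))) =
        min (2 * s) ((j + 2).choose 2)) := by
  have hfin : ∀ j, FiniteDimensional K ↥(homogeneousSubmodule (Fin 3) K j) := fun j =>
    Module.Finite.iff_fg.mpr (homogeneousSubmodule_fg (Fin 3) K j)
  -- `2 * s + 1` exceeds `2 * s`, a degree in which `2 * s` conditions already fit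
  set M := 2 * s + 1 with hM
  obtain ⟨t, hinj, ht⟩ := exists_jets
    (fun j => (homogeneousSubmodule (Fin 3) K j).map (toCurve K M).toLinearMap) M s
  set P : Polynomial K →ₗ[K] (Fin s → K × K) := LinearMap.pi fun i => jet (t i) with hP
  set E : MvPolynomial (Fin 3) K →ₗ[K] (Fin s → K × K) := P ∘ₗ (toCurve K M).toLinearMap with hE
  refine ⟨fun i => chordForm K (t i), fun i => tangentForm K M (t i),
    fun i => ![1, t i, t i ^ M], ?_, ?_, ?_, ?_, ?_, ?_, fun j => ?_⟩
  · intro i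
    simp only [homogeneousSubmodule_one_eq_span_X, chordForm, ← smul_eq_C_mul]
    exact sub_mem (Submodule.subset_span ⟨1, rfl⟩)
      (Submodule.smul_mem _ _ (Submodule.subset_span ⟨0, rfl⟩))
  · intro i
    simp only [homogeneousSubmodule_one_eq_span_X, tangentForm, ← smul_eq_C_mul]
    have h (k : Fin 3) : (X k : MvPolynomial (Fin 3) K) ∈ Submodule.span K (Set.range X) :=
      Submodule.subset_span ⟨k, rfl⟩
    exact sub_mem (sub_mem (h 2) (Submodule.smul_mem _ _ (h 0)))
      (Submodule.smul_mem _ _ (sub_mem (h 1) (Submodule.smul_mem _ _ (h 0))))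
  · intro i
    rw [LinearIndependent.pair_iff]
    intro a b hab
    -- evaluation at `(0, 0, 1)` and `(0, 1, 0)` reads off the coefficients of `X 2` and `X 1`
    have h2 := congrArg (aeval (![0, 0, 1] : Fin 3 → K)) hab
    have h1 := congrArg (aeval (![0, 1, 0] : Fin 3 → K)) hab
    simp [chordForm, tangentForm] at h1 h2
    subst h2
    simpa using h1
  · intro i h
    simpa using congrFun h 0
  · intro i
    simp [chordForm, tangentForm]
  · intro i j hij c h
    have h0 := congrFun h 0
    have h1 := congrFun h 1
    simp at h0 h1
    subst h0
    exact hij (hinj (by simpa using h1.symm))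
  · have hker : homogeneousSubmodule (Fin 3) K j ⊓ Submodule.restrictScalars K
        (⨅ i, Ideal.span {chordForm K (t i) ^ 2, tangentForm K M (t i)}) =
        homogeneousSubmodule (Fin 3) K j ⊓ LinearMap.ker E := by
      ext F
      simp only [Submodule.mem_inf, Submodule.restrictScalars_mem, Submodule.mem_iInf]
      refine and_congr_right fun hF => ?_
      rw [LinearMap.mem_ker, _root_.funext_iff]
      exact forall_congr' fun i => mem_span_iff (t i) hF
    rw [hker]
    have hle (j : ℕ) : finrank K ↥((homogeneousSubmodule (Fin 3) K j).map E) ≤ 2 * s := by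
      refine (Submodule.finrank_le _).trans ?_
      rw [finrank_pi_fintype]
      simp [finrank_prod, mul_comm]
    have hsmall (j : ℕ) (hj : j < M) :
        min (2 * s) ((j + 2).choose 2) ≤
          finrank K ↥((homogeneousSubmodule (Fin 3) K j).map E) := by
      have h1 := ht j hj
      have h2 := finrank_map_add_ker P
        ((homogeneousSubmodule (Fin 3) K j).map (toCurve K M).toLinearMap)
      have h3 := finrank_map_add_ker (toCurve K M).toLinearMap (homogeneousSubmodule (Fin 3) K j)
      have h4 : homogeneousSubmodule (Fin 3) K j ⊓ LinearMap.ker (toCurve K M).toLinearMap = ⊥ := by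
        rw [eq_bot_iff]
        rintro F ⟨hF, hF0⟩
        exact toCurve_injOn hj hF hF0
      rw [h4, finrank_bot, finrank_homogeneousSubmodule_three] at h3
      rw [← Submodule.map_comp, ← hE] at h2
      omega
    have htot := finrank_map_add_ker E (homogeneousSubmodule (Fin 3) K j)
    rw [finrank_homogeneousSubmodule_three] at htot ⊢
    have hj2 := hle j
    have key : min (2 * s) ((j + 2).choose 2) ≤
        finrank K ↥((homogeneousSubmodule (Fin 3) K j).map E) := by
      rcases lt_or_ge j M with hj | hj
      · exact hsmall j hj
      · -- multiplication by `X 0`, which restricts to `1` on the curve, preserves all jets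
        have hmono : (homogeneousSubmodule (Fin 3) K (2 * s)).map E ≤
            (homogeneousSubmodule (Fin 3) K j).map E := by
          rintro _ ⟨F, hF, rfl⟩
          refine ⟨X 0 ^ (j - 2 * s) * F, ?_, ?_⟩
          · have := ((isHomogeneous_X K (0 : Fin 3)).pow (j - 2 * s)).mul hF
            rwa [one_mul, Nat.sub_add_cancel (by omega)] at this
          · simp [hE, toCurve]
        have h1 := Submodule.finrank_mono hmono
        have h2 := hsmall (2 * s) (by omega)
        have h3 : 2 * s ≤ (2 * s + 2).choose 2 := by
          rw [Nat.choose_succ_succ' (2 * s + 1) 1, Nat.choose_one_right]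
          omega
        omega
    omega
end
end

section
/- For every r ≥ 1 there exist pairwise disjoint lines in ℙ³ with ideals P₁,…,P_r and a linear form L ∈ [R]₁ such that, for the Hartshorne–Rao module M(C) of their union C, the multiplication map ×L : [M(C)]_{t−1} → [M(C)]_t has maximal rank (is injective or surjective) for every integer t. (This is the existential formulation, equivalent by semicontinuity to: the Hartshorne–Rao module of a general union of r skew lines has the Weak Lefschetz Property.) -/
/-!
Let `H` be the plane `L = 0`, `C` the union of the lines and `Z = C ∩ H`. The snake lemma
identifies the cokernel of `×L : [M(C)]_{t-1} → [M(C)]_t` with the cokernel of the evaluation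
`[R/L]_t → K^Z`, and shows that `×L` is injective when no nonzero form of degree `t`
on `H` vanishes on `Z`. Thus it suffices that the points `Z` have maximal rank: for every
degree the evaluation map on plane forms is injective or surjective.

With `L = x₀`, the lines used here join `(0 : 1 : a : b)` to `(1 : 0 : -b : a)` for `(a, b)` in
a set `S` of `r` points of `ℕ × ℕ`. Two such lines are skew because the relevant determinant is
`(a - a')² + (b - b')²`, which is nonzero in characteristic zero for distinct natural points.

The set `S` is chosen by exhausting `ℕ × ℕ` by increasing `a + b` (`exists_degree_initial`). Then
for each `d` either `S ⊆ T_d` or `T_d ⊆ S`, where `T_d` is the triangle `a + b ≤ d`. Evaluation of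
plane forms of degree `d` at the points of `T_d` is bijective: `nodal` gives an explicit
Lagrange basis, hence surjectivity (`exists_interpolant`), and the source and target have the same
dimension, hence injectivity (`X_zero_dvd_of_vanish`).
-/

open MvPolynomial Module

noncomputable section

variable {K : Type} [Field K]

abbrev Rp (K : Type) [Field K] := MvPolynomial (Fin 4) K

/-- The product of the coordinate rings of the lines. -/
abbrev Dmod (K : Type) [Field K] {ι : Type} (P : ι → Ideal (Rp K)) :=
  (i : ι) → (Rp K ⧸ P i)

/-- The natural map `R → ⊕ᵢ R/Pᵢ`. -/
def Phi {ι : Type} (P : ι → Ideal (Rp K)) : Rp K →ₗ[Rp K] Dmod K P :=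
  LinearMap.pi fun i => (P i).mkQ

/-- The Hartshorne–Rao module of the union of the (disjoint) lines with ideals `Pᵢ`:
the cokernel of `R → ⊕ᵢ R/Pᵢ`. -/
abbrev HRmod {ι : Type} (P : ι → Ideal (Rp K)) :=
  Dmod K P ⧸ LinearMap.range (Phi P)

/-- The degree-`t` component `[M(C)]_t = coker([R]_t → ⊕ᵢ [R/Pᵢ]_t)` of the
Hartshorne–Rao module, realized as a `K`-subspace of the cokernel module. -/
def HRcomp {ι : Type} (P : ι → Ideal (Rp K)) (t : ℕ) : Submodule K (HRmod P) :=
  Submodule.map ((LinearMap.range (Phi P)).mkQ.restrictScalars K)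
    (Submodule.pi Set.univ fun i =>
      Submodule.map (((P i).mkQ).restrictScalars K) (homogeneousSubmodule (Fin 4) K t))

/-- `×L^m : [M(C)]_{t-m} → [M(C)]_t` has maximal rank (is injective or surjective)
for every integer `t` (in degrees where the source is zero this is automatic). -/
def MaxRankPow {ι : Type} (P : ι → Ideal (Rp K)) (L : Rp K) (m : ℕ) : Prop :=
  ∀ t : ℕ,
    (∀ x ∈ HRcomp P t, (L ^ m) • x = 0 → x = 0) ∨
    (∀ y ∈ HRcomp P (t + m), ∃ x ∈ HRcomp P t, (L ^ m) • x = y)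

/-! ### Polynomial preliminaries -/

lemma weight_one_eq_degree (d : Fin 4 →₀ ℕ) : Finsupp.weight (1 : Fin 4 → ℕ) d = d.degree :=
  (DFunLike.congr_fun Finsupp.degree_eq_weight_one d).symm

lemma isHomogeneous_of_X_mul {g : Rp K} {t : ℕ} (h : (X 0 * g).IsHomogeneous (t + 1)) :
    g.IsHomogeneous t := by
  intro d hd
  have h1 : coeff (Finsupp.single 0 1 + d) (X 0 * g) ≠ 0 := by
    rwa [coeff_X_mul]
  have h2 := h h1
  rw [weight_one_eq_degree] at h2 ⊢
  rw [map_add, Finsupp.degree_single] at h2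
  omega

/-- Two substitutions that agree on the variables modulo `I` agree modulo `I`. -/
lemma aeval_sub_mem {I : Ideal (Rp K)} (u v : Fin 4 → Rp K) (h : ∀ j, u j - v j ∈ I) (f : Rp K) :
    aeval u f - aeval v f ∈ I := by
  rw [← Ideal.Quotient.mk_eq_mk_iff_sub_mem]
  have : (Ideal.Quotient.mkₐ K I).comp (aeval u) = (Ideal.Quotient.mkₐ K I).comp (aeval v) := by
    apply MvPolynomial.algHom_ext
    intro j
    simp only [AlgHom.comp_apply, aeval_X, Ideal.Quotient.mkₐ_eq_mk]
    rw [Ideal.Quotient.mk_eq_mk_iff_sub_mem]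
    exact h j
  exact DFunLike.congr_fun this f

/-- The point `(0 : 1 : a : b)` of the plane `x₀ = 0`. -/
def pt (a b : K) : Fin 4 → K := ![0, 1, a, b]

/-- On the multiples `(0, s, a s, b s)` of `pt a b`, a form of degree `t` is `s ^ t` times its
value at `pt a b`. -/
lemma aeval_cone {f : Rp K} {t : ℕ} (hf : f.IsHomogeneous t) (a b : K) :
    aeval (![0, X 1, C a * X 1, C b * X 1] : Fin 4 → Rp K) f = C (eval (pt a b) f) * X 1 ^ t := by
  have hu : (![0, X 1, C a * X 1, C b * X 1] : Fin 4 → Rp K) = fun j => C (pt a b j) * X 1 := by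
    funext j
    fin_cases j <;> simp [pt]
  rw [hu]
  rw [aeval_def, eval₂_eq, eval_eq, map_sum, Finset.sum_mul]
  refine Finset.sum_congr rfl fun d hd => ?_
  have hdeg : ∑ i ∈ d.support, d i = t :=
    (hf.degree_eq_sum_deg_support hd).symm
  simp only [mul_pow, Finset.prod_mul_distrib, Finset.prod_pow_eq_pow_sum, hdeg, map_mul, map_prod,
    map_pow, algebraMap_eq]
  ring

/-! ### The lines -/

/-- First linear form cutting out the line through `(0 : 1 : a : b)` and `(1 : 0 : -b : a)`. -/
def lf (a b : K) : Rp K := X 2 - C a * X 1 + C b * X 0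

/-- Second linear form cutting out the line through `(0 : 1 : a : b)` and `(1 : 0 : -b : a)`. -/
def lf' (a b : K) : Rp K := X 3 - C b * X 1 - C a * X 0

/-- The ideal of the line through `(0 : 1 : a : b)` and `(1 : 0 : -b : a)`. -/
abbrev lineIdeal (a b : K) : Ideal (Rp K) := Ideal.span {lf a b, lf' a b}

lemma lf_mem (a b : K) : lf a b ∈ homogeneousSubmodule (Fin 4) K 1 := by
  refine IsHomogeneous.add (IsHomogeneous.sub ?_ ?_) ?_
  · exact isHomogeneous_X _ _
  · exact isHomogeneous_C_mul_X _ _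
  · exact isHomogeneous_C_mul_X _ _

lemma lf'_mem (a b : K) : lf' a b ∈ homogeneousSubmodule (Fin 4) K 1 := by
  refine IsHomogeneous.sub (IsHomogeneous.sub ?_ ?_) ?_
  · exact isHomogeneous_X _ _
  · exact isHomogeneous_C_mul_X _ _
  · exact isHomogeneous_C_mul_X _ _

lemma lf_linearIndependent (a b : K) : LinearIndependent K ![lf a b, lf' a b] := by
  rw [LinearIndependent.pair_iff]
  intro s t h
  have h2 := congrArg (eval (![0, 0, 1, 0] : Fin 4 → K)) h
  have h3 := congrArg (eval (![0, 0, 0, 1] : Fin 4 → K)) h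
  simp [lf, lf', smul_eval] at h2 h3
  exact ⟨h2, h3⟩

lemma lf_span (a b a' b' : K) (h : (a - a') ^ 2 + (b - b') ^ 2 ≠ 0) :
    Submodule.span K {lf a b, lf' a b, lf a' b', lf' a' b'} =
      homogeneousSubmodule (Fin 4) K 1 := by
  apply le_antisymm
  · rw [Submodule.span_le]
    rintro x (rfl | rfl | rfl | rfl)
    exacts [lf_mem _ _, lf'_mem _ _, lf_mem _ _, lf'_mem _ _]
  · set W := Submodule.span K {lf a b, lf' a b, lf a' b', lf' a' b'} with hW
    have m1 : lf a b ∈ W := Submodule.subset_span (by simp)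
    have m2 : lf' a b ∈ W := Submodule.subset_span (by simp)
    have m3 : lf a' b' ∈ W := Submodule.subset_span (by simp)
    have m4 : lf' a' b' ∈ W := Submodule.subset_span (by simp)
    have hC : ∀ (c : K) {x : Rp K}, x ∈ W → C c * x ∈ W := fun c x hx => by
      rw [C_mul']; exact W.smul_mem c hx
    have cancel : ∀ x : Rp K, C ((a - a') ^ 2 + (b - b') ^ 2) * x ∈ W → x ∈ W := fun x hx => by
      have := hC ((a - a') ^ 2 + (b - b') ^ 2)⁻¹ hx
      rwa [← mul_assoc, ← C_mul, inv_mul_cancel₀ h, C_1, one_mul] at this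
    have x0 : (X 0 : Rp K) ∈ W := by
      apply cancel
      have : C ((a - a') ^ 2 + (b - b') ^ 2) * (X 0 : Rp K) =
          C (b - b') * (lf a b - lf a' b') - C (a - a') * (lf' a b - lf' a' b') := by
        simp only [lf, lf', map_add, map_sub, map_pow]; ring
      rw [this]
      exact W.sub_mem (hC _ (W.sub_mem m1 m3)) (hC _ (W.sub_mem m2 m4))
    have x1 : (X 1 : Rp K) ∈ W := by
      apply cancel
      have : C ((a - a') ^ 2 + (b - b') ^ 2) * (X 1 : Rp K) =
          -(C (a - a') * (lf a b - lf a' b') + C (b - b') * (lf' a b - lf' a' b')) := by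
        simp only [lf, lf', map_add, map_sub, map_pow]; ring
      rw [this]
      exact W.neg_mem (W.add_mem (hC _ (W.sub_mem m1 m3)) (hC _ (W.sub_mem m2 m4)))
    have x2 : (X 2 : Rp K) ∈ W := by
      have : (X 2 : Rp K) = lf a b + C a * X 1 - C b * X 0 := by simp only [lf]; ring
      rw [this]
      exact W.sub_mem (W.add_mem m1 (hC _ x1)) (hC _ x0)
    have x3 : (X 3 : Rp K) ∈ W := by
      have : (X 3 : Rp K) = lf' a b + C b * X 1 + C a * X 0 := by simp only [lf']; ring
      rw [this]
      exact W.add_mem (W.add_mem m2 (hC _ x1)) (hC _ x0)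
    rw [homogeneousSubmodule_one_eq_span_X, Submodule.span_le]
    rintro _ ⟨j, rfl⟩
    fin_cases j
    exacts [x0, x1, x2, x3]

/-- Restriction to the line, in the coordinates `x₀, x₁`, viewed as a retraction of `R` onto
`K[x₀, x₁]`. -/
def restr (a b : K) : Rp K →ₐ[K] Rp K :=
  aeval (![X 0, X 1, C a * X 1 - C b * X 0, C b * X 1 + C a * X 0] : Fin 4 → Rp K)

lemma sub_restr_mem (a b : K) (f : Rp K) : f - restr a b f ∈ lineIdeal a b := by
  have := aeval_sub_mem (I := lineIdeal a b) X
    ![X 0, X 1, C a * X 1 - C b * X 0, C b * X 1 + C a * X 0] ?_ f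
  · simpa [restr] using this
  · have m1 : lf a b ∈ lineIdeal a b := Ideal.subset_span (by simp)
    have m2 : lf' a b ∈ lineIdeal a b := Ideal.subset_span (by simp)
    intro j
    fin_cases j
    · simp
    · simp
    · convert m1 using 1
      simp [lf]; ring
    · convert m2 using 1
      simp [lf']; ring

lemma mem_lineIdeal_iff (a b : K) (f : Rp K) : f ∈ lineIdeal a b ↔ restr a b f = 0 := by
  constructor
  · intro h
    have : lineIdeal a b ≤ RingHom.ker (restr a b) := by
      rw [Ideal.span_le]
      rintro x (rfl | rfl)
      · simp [RingHom.mem_ker, restr, lf]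
      · simp [RingHom.mem_ker, restr, lf']
    exact this h
  · intro h
    simpa [h] using sub_restr_mem a b f

/-- `x₀` is a nonzerodivisor modulo the ideal of the line. -/
lemma mem_of_X_mul_mem {a b : K} {f : Rp K} (h : X 0 * f ∈ lineIdeal a b) : f ∈ lineIdeal a b := by
  rw [mem_lineIdeal_iff] at h ⊢
  rw [map_mul] at h
  have hX : restr a b (X 0) = X 0 := by simp [restr]
  rw [hX] at h
  exact (mul_eq_zero.mp h).resolve_left (X_ne_zero 0)

lemma lineIdeal_component {a b : K} {f : Rp K} (h : f ∈ lineIdeal a b) (n : ℕ) :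
    homogeneousComponent n f ∈ lineIdeal a b := by
  let := MvPolynomial.gradedAlgebra (σ := Fin 4) (R := K)
  refine homogeneousComponent_mem_of_mem (Ideal.homogeneous_span _ _ ?_) h n
  rintro x (rfl | rfl)
  exacts [⟨1, lf_mem a b⟩, ⟨1, lf'_mem a b⟩]

lemma eval_pt_of_mem {a b : K} {f : Rp K} (h : f ∈ lineIdeal a b) : eval (pt a b) f = 0 := by
  have : lineIdeal a b ≤ RingHom.ker (eval (pt a b)) := by
    rw [Ideal.span_le]
    rintro x (rfl | rfl)
    · simp [RingHom.mem_ker, lf, pt]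
    · simp [RingHom.mem_ker, lf', pt]
  exact this h

/-- On a line, a form vanishing at the point of intersection with `x₀ = 0` is divisible
by `x₀`. -/
lemma exists_quotient {a b : K} {f : Rp K} {t : ℕ} (hf : f.IsHomogeneous (t + 1))
    (h0 : eval (pt a b) f = 0) :
    ∃ g : Rp K, g.IsHomogeneous t ∧ f - X 0 * g ∈ lineIdeal a b := by
  -- Setting `x₀ = 0` in the restriction to the line gives the value at the point, which is zero.
  have h1 : restr a b f - aeval (![0, X 1, C a * X 1, C b * X 1] : Fin 4 → Rp K) f ∈
      Ideal.span {(X 0 : Rp K)} := by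
    apply aeval_sub_mem
    intro j
    rw [Ideal.mem_span_singleton]
    fin_cases j
    · simp
    · simp
    · exact ⟨-C b, by simp; ring⟩
    · exact ⟨C a, by simp; ring⟩
  rw [aeval_cone hf, h0, C_0, zero_mul, sub_zero, Ideal.mem_span_singleton] at h1
  obtain ⟨g, hg⟩ := h1
  refine ⟨g, isHomogeneous_of_X_mul ?_, hg ▸ sub_restr_mem a b f⟩
  rw [← hg, ← one_mul (t + 1)]
  apply hf.aeval
  intro j
  fin_cases j
  · exact isHomogeneous_X _ _
  · exact isHomogeneous_X _ _
  · exact (isHomogeneous_C_mul_X _ _).sub (isHomogeneous_C_mul_X _ _)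
  · exact (isHomogeneous_C_mul_X _ _).add (isHomogeneous_C_mul_X _ _)

/-! ### Interpolation on triangular grids -/

/-- The Lagrange form of degree `d` for the grid point `p` in the triangle `T_d`: the product of
the vertical lines to the left of `p`, the horizontal lines below `p`, and the antidiagonals of
`T_d` above `p`. -/
def nodal (K : Type) [Field K] (d : ℕ) (p : ℕ × ℕ) : Rp K :=
  (∏ i ∈ Finset.range p.1, (X 2 - C (i : K) * X 1)) *
  (∏ j ∈ Finset.range p.2, (X 3 - C (j : K) * X 1)) *
  ∏ k ∈ Finset.Ioc (p.1 + p.2) d, (C (k : K) * X 1 - X 2 - X 3)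

lemma nodal_isHomogeneous {d : ℕ} {p : ℕ × ℕ} (hp : p.1 + p.2 ≤ d) :
    (nodal K d p).IsHomogeneous d := by
  have h1 : (∏ i ∈ Finset.range p.1, (X 2 - C (i : K) * X 1 : Rp K)).IsHomogeneous
      (∑ i ∈ Finset.range p.1, 1) :=
    IsHomogeneous.prod _ _ _ fun i _ => (isHomogeneous_X _ _).sub (isHomogeneous_C_mul_X _ _)
  have h2 : (∏ i ∈ Finset.range p.2, (X 3 - C (i : K) * X 1 : Rp K)).IsHomogeneous
      (∑ i ∈ Finset.range p.2, 1) :=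
    IsHomogeneous.prod _ _ _ fun i _ => (isHomogeneous_X _ _).sub (isHomogeneous_C_mul_X _ _)
  have h3 : (∏ k ∈ Finset.Ioc (p.1 + p.2) d,
      (C (k : K) * X 1 - X 2 - X 3 : Rp K)).IsHomogeneous
      (∑ i ∈ Finset.Ioc (p.1 + p.2) d, 1) :=
    IsHomogeneous.prod _ _ _ fun i _ =>
      ((isHomogeneous_C_mul_X _ _).sub (isHomogeneous_X _ _)).sub (isHomogeneous_X _ _)
  have h := (h1.mul h2).mul h3
  simp only [Finset.sum_const, Finset.card_range, Nat.card_Ioc, smul_eq_mul, mul_one] at h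
  rwa [Nat.add_sub_cancel' hp] at h

/-- The grid point `p` as a point of the plane `x₀ = 0` in `ℙ³`. -/
abbrev gpt (K : Type) [Field K] (p : ℕ × ℕ) : Fin 4 → K := pt (p.1 : K) (p.2 : K)

lemma eval_nodal (d : ℕ) (p q : ℕ × ℕ) : eval (gpt K q) (nodal K d p) =
    (∏ i ∈ Finset.range p.1, ((q.1 : K) - i)) * (∏ j ∈ Finset.range p.2, ((q.2 : K) - j)) *
      ∏ k ∈ Finset.Ioc (p.1 + p.2) d, ((k : K) - q.1 - q.2) := by
  simp [nodal, pt]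

lemma eval_nodal_self [CharZero K] (d : ℕ) (p : ℕ × ℕ) : eval (gpt K p) (nodal K d p) ≠ 0 := by
  rw [eval_nodal]
  refine mul_ne_zero (mul_ne_zero ?_ ?_) ?_ <;> rw [Finset.prod_ne_zero_iff]
  · intro i hi
    rw [sub_ne_zero, Ne, Nat.cast_inj]
    exact (Finset.mem_range.mp hi).ne'
  · intro i hi
    rw [sub_ne_zero, Ne, Nat.cast_inj]
    exact (Finset.mem_range.mp hi).ne'
  · intro k hk
    rw [sub_sub, sub_ne_zero, ← Nat.cast_add, Ne, Nat.cast_inj]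
    exact (Finset.mem_Ioc.mp hk).1.ne'

lemma eval_nodal_of_ne {d : ℕ} {p q : ℕ × ℕ} (hq : q.1 + q.2 ≤ d) (hpq : p ≠ q) :
    eval (gpt K q) (nodal K d p) = 0 := by
  rw [eval_nodal]
  by_cases h1 : q.1 < p.1
  · rw [Finset.prod_eq_zero (Finset.mem_range.mpr h1) (sub_self _), zero_mul, zero_mul]
  by_cases h2 : q.2 < p.2
  · rw [Finset.prod_eq_zero (s := Finset.range p.2) (Finset.mem_range.mpr h2) (sub_self _),
      mul_zero, zero_mul]
  have h3 : p.1 + p.2 < q.1 + q.2 := by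
    by_contra h
    exact hpq (Prod.ext (by omega) (by omega))
  rw [Finset.prod_eq_zero (Finset.mem_Ioc.mpr ⟨h3, hq⟩) (by push_cast; ring), mul_zero]

/-- Forms of degree `d` take arbitrary values on the points of `T_d`. -/
lemma exists_interpolant [CharZero K] (d : ℕ) (S : Finset (ℕ × ℕ)) (hS : ∀ p ∈ S, p.1 + p.2 ≤ d)
    (v : ℕ × ℕ → K) :
    ∃ F : Rp K, F.IsHomogeneous d ∧ ∀ p ∈ S, eval (gpt K p) F = v p := by
  refine ⟨∑ p ∈ S, C (v p / eval (gpt K p) (nodal K d p)) * nodal K d p, ?_, ?_⟩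
  · exact IsHomogeneous.sum _ _ _ fun p hp => (nodal_isHomogeneous (hS p hp)).C_mul _
  · intro q hq
    rw [map_sum, Finset.sum_eq_single_of_mem q hq]
    · rw [map_mul, eval_C, div_mul_cancel₀ _ (eval_nodal_self d q)]
    · intro p _ hpq
      rw [map_mul, eval_nodal_of_ne (hS q hq) hpq, mul_zero]

/-- The triangle `T_d` of grid points with `a + b ≤ d`. -/
def tri (d : ℕ) : Finset (ℕ × ℕ) :=
  (Finset.range (d + 1) ×ˢ Finset.range (d + 1)).filter fun p => p.1 + p.2 ≤ d

lemma mem_tri {d : ℕ} {p : ℕ × ℕ} : p ∈ tri d ↔ p.1 + p.2 ≤ d := by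
  simp only [tri, Finset.mem_filter, Finset.mem_product, Finset.mem_range]
  omega

/-- The form of degree `d` in `x₁, x₂, x₃` with given coefficients; its monomials are
indexed by `T_d`. -/
def planeForm (K : Type) [Field K] (d : ℕ) : (tri d → K) →ₗ[K] Rp K :=
  Fintype.linearCombination K fun p : tri d =>
    X 1 ^ (d - p.1.1 - p.1.2) * X 2 ^ p.1.1 * X 3 ^ p.1.2

lemma exists_planeForm {d : ℕ} {F : Rp K} (hF : F.IsHomogeneous d) :
    ∃ c : tri d → K, X 0 ∣ F - planeForm K d c := by
  let W : Submodule K (Rp K) :=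
    LinearMap.range (planeForm K d) ⊔ (Ideal.span {(X 0 : Rp K)}).restrictScalars K
  have hW : F ∈ W := by
    rw [F.as_sum]
    refine Submodule.sum_mem _ fun m hm => ?_
    have hdeg : m 0 + m 1 + m 2 + m 3 = d := by
      have := hF (mem_support_iff.mp hm)
      rw [weight_one_eq_degree, Finsupp.degree_eq_sum] at this
      simpa [Fin.sum_univ_four] using this
    have hmon : monomial m (coeff m F) =
        coeff m F • ((X 0 : Rp K) ^ m 0 * X 1 ^ m 1 * X 2 ^ m 2 * X 3 ^ m 3) := by
      rw [monomial_eq, C_mul', Finsupp.prod_fintype _ _ (by simp)]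
      simp [Fin.prod_univ_four]
    rw [hmon]
    refine W.smul_mem _ ?_
    by_cases h0 : m 0 = 0
    · refine Submodule.mem_sup_left ⟨Pi.single ⟨(m 2, m 3), mem_tri.mpr (by simp; omega)⟩ 1, ?_⟩
      rw [planeForm, Fintype.linearCombination_apply_single, h0, pow_zero, one_mul, one_smul]
      congr 3
      simp; omega
    · refine Submodule.mem_sup_right ?_
      rw [Submodule.restrictScalars_mem, Ideal.mem_span_singleton]
      exact (((dvd_pow_self _ h0).mul_right _).mul_right _).mul_right _
  obtain ⟨_, ⟨c, rfl⟩, z, hz, hsum⟩ := Submodule.mem_sup.mp hW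
  refine ⟨c, ?_⟩
  rw [Submodule.restrictScalars_mem, Ideal.mem_span_singleton] at hz
  rwa [← hsum, add_sub_cancel_left]

lemma eval_eq_of_X_dvd {F G : Rp K} (h : X 0 ∣ F - G) (a b : K) :
    eval (pt a b) F = eval (pt a b) G := by
  obtain ⟨g, hg⟩ := h
  rw [← sub_eq_zero, ← map_sub, hg, map_mul, eval_X]
  simp [pt]

/-- A form of degree `d` vanishing on `T_d` vanishes on the plane `x₀ = 0`: the square linear
system expressing this is onto by interpolation, hence injective. -/
lemma X_zero_dvd_of_vanish [CharZero K] {d : ℕ} {F : Rp K} (hF : F.IsHomogeneous d)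
    (h : ∀ p : ℕ × ℕ, p.1 + p.2 ≤ d → eval (gpt K p) F = 0) : X 0 ∣ F := by
  let ev : (tri d → K) →ₗ[K] (tri d → K) :=
    (LinearMap.pi fun p : tri d => (aeval (gpt K p.1)).toLinearMap) ∘ₗ planeForm K d
  have hev : ∀ c p, ev c p = eval (gpt K p.1) (planeForm K d c) := fun c p => by
    simp [ev]
  have hsurj : Function.Surjective ev := by
    intro v
    obtain ⟨G, hG, hGv⟩ := exists_interpolant (K := K) d (tri d) (fun p hp => mem_tri.mp hp)
      (fun p => if hp : p ∈ tri d then v ⟨p, hp⟩ else 0)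
    obtain ⟨c, hc⟩ := exists_planeForm hG
    refine ⟨c, funext fun p => ?_⟩
    rw [hev, ← eval_eq_of_X_dvd hc, hGv p.1 p.2, dif_pos p.2]
  have hinj : Function.Injective ev := LinearMap.injective_iff_surjective.mpr hsurj
  obtain ⟨c, hc⟩ := exists_planeForm hF
  have hc0 : c = 0 := by
    apply hinj
    rw [map_zero]
    funext p
    rw [hev, ← eval_eq_of_X_dvd hc, h p.1 (mem_tri.mp p.2), Pi.zero_apply]
  rwa [hc0, map_zero, sub_zero] at hc

/-- There are sets of every finite size obtained by exhausting `ℕ × ℕ` by increasing `a + b`. -/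
lemma exists_degree_initial (r : ℕ) : ∃ S : Finset (ℕ × ℕ), S.card = r ∧
    ∀ p ∈ S, ∀ q ∉ S, p.1 + p.2 ≤ q.1 + q.2 := by
  induction r with
  | zero => exact ⟨∅, by simp⟩
  | succ r ih =>
    obtain ⟨S, hS, hmin⟩ := ih
    obtain ⟨q₀, hq₀⟩ := Infinite.exists_notMem_finset S
    obtain ⟨p₀, hp₀, hp₀min⟩ : ∃ p ∉ S, ∀ q ∉ S, p.1 + p.2 ≤ q.1 + q.2 := by
      have hne : {p : ℕ × ℕ | p ∉ S}.Nonempty := ⟨q₀, hq₀⟩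
      exact ⟨_, Function.argminOn_mem (fun p : ℕ × ℕ => p.1 + p.2) _ hne,
        fun q hq => Function.argminOn_le (fun p : ℕ × ℕ => p.1 + p.2) _ hq⟩
    refine ⟨insert p₀ S, by rw [Finset.card_insert_of_notMem hp₀, hS], ?_⟩
    intro p hp q hq
    rw [Finset.mem_insert, not_or] at hq
    rcases Finset.mem_insert.mp hp with rfl | hp
    · exact hp₀min q hq.2
    · exact hmin p hp q hq.2

/-! ### Maximal rank -/

/-- Multiplication by `x₀` has maximal rank for lines through the grid points of a set `S`
compatible with the filtration by the triangles `T_d`. -/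
lemma maxRank_of_points [CharZero K] {r : ℕ} (S : Finset (ℕ × ℕ))
    (hS : ∀ p ∈ S, ∀ q ∉ S, p.1 + p.2 ≤ q.1 + q.2) (e : Fin r ≃ S) :
    MaxRankPow (fun i => lineIdeal ((e i).1.1 : K) ((e i).1.2 : K)) (X 0) 1 := by
  intro t
  simp only [pow_one]
  by_cases hT : ∀ p : ℕ × ℕ, p.1 + p.2 ≤ t + 1 → p ∈ S
  · left
    rintro _ ⟨f, hf, rfl⟩ hx
    choose g hg hgf using fun i => hf i (Set.mem_univ i)
    obtain rfl : (fun i => Submodule.Quotient.mk (g i)) = f := funext hgf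
    change (X 0 : Rp K) • Submodule.Quotient.mk _ = _ at hx
    rw [← Submodule.Quotient.mk_smul, Submodule.Quotient.mk_eq_zero] at hx
    obtain ⟨F, hF⟩ := hx
    have hF1 : ∀ i, F - X 0 * g i ∈ lineIdeal ((e i).1.1 : K) ((e i).1.2 : K) := fun i =>
      (Submodule.Quotient.eq _).mp (congrFun hF i)
    -- `F` need not be homogeneous; its component of degree `t + 1` restricts to `x₀ gᵢ` as well.
    have hF2 : ∀ i, homogeneousComponent (t + 1) F - X 0 * g i ∈
        lineIdeal ((e i).1.1 : K) ((e i).1.2 : K) := fun i => by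
      have h1 := lineIdeal_component (hF1 i) (t + 1)
      have h2 : (X 0 * g i).IsHomogeneous (t + 1) := by
        rw [add_comm]; exact (isHomogeneous_X _ _).mul (hg i)
      rwa [map_sub, homogeneousComponent_eq_self h2] at h1
    obtain ⟨G, hG⟩ : X 0 ∣ homogeneousComponent (t + 1) F := by
      refine X_zero_dvd_of_vanish (homogeneousComponent_isHomogeneous _ _) fun p hp => ?_
      have h1 := eval_pt_of_mem (hF2 (e.symm ⟨p, hT p hp⟩))
      simpa [pt] using h1
    refine (Submodule.Quotient.mk_eq_zero _).mpr ⟨G, funext fun i => ?_⟩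
    refine (Submodule.Quotient.eq _).mpr (mem_of_X_mul_mem ?_)
    rw [mul_sub, ← hG]
    exact hF2 i
  · right
    push Not at hT
    obtain ⟨q, hq, hqS⟩ := hT
    rintro _ ⟨f, hf, rfl⟩
    choose g hg hgf using fun i => hf i (Set.mem_univ i)
    obtain rfl : (fun i => Submodule.Quotient.mk (g i)) = f := funext hgf
    -- Here `S ⊆ T_(t+1)`, so one form `F` can match all `gᵢ` at the points of `S`.
    obtain ⟨F, hF, hFv⟩ := exists_interpolant (K := K) (t + 1) S
      (fun p hp => (hS p hp q hqS).trans hq)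
      (fun p => if hp : p ∈ S then eval (gpt K p) (g (e.symm ⟨p, hp⟩)) else 0)
    have hv : ∀ i, eval (gpt K (e i).1) (g i - F) = 0 := fun i => by
      rw [map_sub, hFv _ (e i).2, dif_pos (e i).2]
      simp
    choose u hu hug using fun i => exists_quotient (IsHomogeneous.sub (hg i) hF) (hv i)
    refine ⟨Submodule.Quotient.mk fun i => Submodule.Quotient.mk (u i),
      ⟨_, fun i _ => ⟨u i, hu i, rfl⟩, rfl⟩, ?_⟩
    change _ = Submodule.Quotient.mk _
    rw [← Submodule.Quotient.mk_smul, eq_comm, Submodule.Quotient.eq]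
    refine ⟨F, funext fun i => ?_⟩
    change Submodule.Quotient.mk F = Submodule.Quotient.mk (g i - X 0 * u i)
    rw [eq_comm, Submodule.Quotient.eq, sub_right_comm]
    exact hug i

/-- For every `r ≥ 1` there exist `r` pairwise disjoint (skew) lines in `ℙ³` and a
linear form `L` such that multiplication by `L` on the Hartshorne–Rao module of
their union has maximal rank in every degree (WLP); existential formulation of the
statement for general skew lines. -/
theorem stmt_5 {K : Type} [Field K] [IsAlgClosed K] [CharZero K]
    (r : ℕ) (hr : 1 ≤ r) :
    ∃ (l l' : Fin r → Rp K) (L : Rp K),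
      (∀ i, l i ∈ homogeneousSubmodule (Fin 4) K 1) ∧
      (∀ i, l' i ∈ homogeneousSubmodule (Fin 4) K 1) ∧
      (∀ i, LinearIndependent K ![l i, l' i]) ∧
      -- pairwise skew: the four linear forms of two distinct lines span `[R]₁`
      (∀ i j, i ≠ j →
        Submodule.span K {l i, l' i, l j, l' j} = homogeneousSubmodule (Fin 4) K 1) ∧
      L ∈ homogeneousSubmodule (Fin 4) K 1 ∧ L ≠ 0 ∧
      MaxRankPow (fun i => Ideal.span {l i, l' i}) L 1 := by
  obtain ⟨S, hcard, hS⟩ := exists_degree_initial r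
  let e : Fin r ≃ S := (S.equivFinOfCardEq hcard).symm
  refine ⟨fun i => lf ((e i).1.1 : K) ((e i).1.2 : K), fun i => lf' ((e i).1.1 : K) ((e i).1.2 : K),
    X 0, fun i => lf_mem _ _, fun i => lf'_mem _ _, fun i => lf_linearIndependent _ _, ?_,
    isHomogeneous_X _ _, X_ne_zero 0, maxRank_of_points S hS e⟩
  intro i j hij
  apply lf_span
  have hne : (e i).1 ≠ (e j).1 := fun h => hij (e.injective (Subtype.ext h))
  intro h
  have hz : (((e i).1.1 : ℤ) - (e j).1.1) ^ 2 + (((e i).1.2 : ℤ) - (e j).1.2) ^ 2 = 0 := by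
    exact_mod_cast (show (((((e i).1.1 : ℤ) - (e j).1.1) ^ 2 +
      (((e i).1.2 : ℤ) - (e j).1.2) ^ 2 : ℤ) : K) = 0 by push_cast; exact h)
  have h1 : ((e i).1.1 : ℤ) - (e j).1.1 = 0 := by nlinarith
  have h2 : ((e i).1.2 : ℤ) - (e j).1.2 = 0 := by nlinarith
  exact hne (Prod.ext (by omega) (by omega))
end
end
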